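/- arXiv:1609.07795 — 10 statements merged into one kernel-verified Lean document; each statement's English description precedes it below -/
import Mathlib

section
/- Let X ∈ Mₙ(ℂ) be anti-symmetric (Xᵀ = −X) of rank 2. Then X·X*·X = (½ tr(X*X))·X and det(1ₙ − X*X) = (1 − ½ tr(X*X))². -/
open Matrix

/-!
An antisymmetric matrix `X` of rank at most two factors as `X = A C Aᵀ` with `C` antisymmetric of
size `2 × 2`. If `Y` is also antisymmetric, then so is the `2 × 2` matrix `Aᵀ Y A`; since, away
from characteristic two, all antisymmetric `2 × 2` matrices are multiples of `!![0, 1; -1, 0]`,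
the product `Aᵀ Y A C` is a scalar `s`. Cyclically permuting the factors of `Y X = (Y A C) Aᵀ`
then gives `tr (Y X) = 2 s` and `det (1 - Y X) = (1 - s)²`, while `X Y X = A C (Aᵀ Y A C) Aᵀ = s
X`. The theorem is the case `Y = Xᴴ`.
-/

section RankFactorization

variable {K m n : Type*} [Field K] [Fintype m] [Fintype n] {r : ℕ}

theorem exists_mul_mul_eq_self_of_rank_le (X : Matrix m n K) (hrank : X.rank ≤ r) :
    ∃ (A : Matrix m (Fin r) K) (L : Matrix (Fin r) m K), A * L * X = X := by
  classical
  obtain ⟨f, hf⟩ : ∃ f : X.mulVecLin.range →ₗ[K] (Fin r → K), Function.Injective f :=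
    finrank_le_iff_exists_linearMap.mp (by rwa [Module.finrank_fin_fun])
  obtain ⟨g, hgf⟩ := f.exists_leftInverse_of_injective (LinearMap.ker_eq_bot.mpr hf)
  obtain ⟨F, hF⟩ := f.exists_extend
  have retract : g ∘ₗ F ∘ₗ X.mulVecLin.range.subtype = LinearMap.id := by rw [hF, hgf]
  refine ⟨(X.mulVecLin.range.subtype ∘ₗ g).toMatrix', F.toMatrix', ?_⟩
  refine ext_of_mulVec_single fun j => ?_
  rw [← mulVec_mulVec, ← mulVec_mulVec, LinearMap.toMatrix'_mulVec, LinearMap.toMatrix'_mulVec]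
  exact congrArg Subtype.val
    (LinearMap.congr_fun retract ⟨X *ᵥ Pi.single j 1, LinearMap.mem_range_self X.mulVecLin _⟩)

end RankFactorization

section Antisymmetric

theorem transpose_mul_mul_transpose_eq_neg {R m n : Type*} [CommRing R] [Fintype n]
    (A : Matrix m n R) {C : Matrix n n R} (hC : Cᵀ = -C) :
    (A * C * Aᵀ)ᵀ = -(A * C * Aᵀ) := by
  rw [transpose_mul, transpose_mul, transpose_transpose, hC, Matrix.neg_mul, Matrix.mul_neg,
    Matrix.mul_assoc]

theorem exists_eq_mul_mul_transpose_of_rank_le {K n : Type*} [Field K] [Fintype n] {r : ℕ}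
    {X : Matrix n n K} (hX : Xᵀ = -X) (hrank : X.rank ≤ r) :
    ∃ (A : Matrix n (Fin r) K) (C : Matrix (Fin r) (Fin r) K), Cᵀ = -C ∧ X = A * C * Aᵀ := by
  obtain ⟨A, L, hleft⟩ := exists_mul_mul_eq_self_of_rank_le X hrank
  have hright : X * (A * L)ᵀ = X := by
    have := congrArg transpose hleft
    rwa [transpose_mul, hX, Matrix.neg_mul, neg_inj] at this
  refine ⟨A, L * X * Lᵀ, transpose_mul_mul_transpose_eq_neg L hX, ?_⟩
  calc
    X = A * L * X * (A * L)ᵀ := by rw [hleft, hright]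
    _ = A * (L * X * Lᵀ) * Aᵀ := by simp only [transpose_mul, Matrix.mul_assoc]

theorem eq_smul_of_transpose_eq_neg_fin_two {R : Type*} [Ring R] [NoZeroDivisors R]
    [NeZero (2 : R)] {M : Matrix (Fin 2) (Fin 2) R} (hM : Mᵀ = -M) :
    M = M 0 1 • !![0, 1; -1, 0] := by
  have diag (i : Fin 2) : M i i = 0 := by
    have h : M i i = -M i i := congrFun₂ hM i i
    rwa [eq_neg_iff_add_eq_zero, ← two_mul, mul_eq_zero_iff_left two_ne_zero] at h
  have offDiag : M 1 0 = -M 0 1 := congrFun₂ hM 0 1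
  ext i j
  fin_cases i <;> fin_cases j <;> simp [diag, offDiag]

theorem mul_eq_smul_one_of_transpose_eq_neg_fin_two {R : Type*} [CommRing R] [NoZeroDivisors R]
    [NeZero (2 : R)] {M N : Matrix (Fin 2) (Fin 2) R} (hM : Mᵀ = -M) (hN : Nᵀ = -N) :
    M * N = -(M 0 1 * N 0 1) • (1 : Matrix (Fin 2) (Fin 2) R) := by
  have square : !![0, 1; -1, 0] * !![0, 1; -1, 0] = -(1 : Matrix (Fin 2) (Fin 2) R) := by
    simp [one_fin_two]
  conv_lhs =>
    rw [eq_smul_of_transpose_eq_neg_fin_two hM, eq_smul_of_transpose_eq_neg_fin_two hN]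
  rw [smul_mul_smul_comm, square, smul_neg, neg_smul]

end Antisymmetric

theorem antisymmetric_rank_two_identities_general {K n : Type*} [Field K] [NeZero (2 : K)]
    [Fintype n] [DecidableEq n] {X Y : Matrix n n K}
    (hX : Xᵀ = -X) (hY : Yᵀ = -Y) (hrank : X.rank ≤ 2) :
    X * Y * X = ((Y * X).trace / 2) • X ∧
    (1 - Y * X).det = (1 - (Y * X).trace / 2) ^ 2 := by
  obtain ⟨A, C, hC, rfl⟩ := exists_eq_mul_mul_transpose_of_rank_le hX hrank
  obtain ⟨s, hs⟩ : ∃ s : K, Aᵀ * (Y * A * C) = s • (1 : Matrix (Fin 2) (Fin 2) K) :=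
    ⟨_, by simpa only [transpose_transpose, Matrix.mul_assoc] using
      mul_eq_smul_one_of_transpose_eq_neg_fin_two (transpose_mul_mul_transpose_eq_neg Aᵀ hY) hC⟩
  have hYX : Y * (A * C * Aᵀ) = Y * A * C * Aᵀ := by simp only [Matrix.mul_assoc]
  have htrace : (Y * (A * C * Aᵀ)).trace / 2 = s := by
    rw [hYX, trace_mul_comm, hs, trace_smul, trace_one, Fintype.card_fin, Nat.cast_ofNat,
      smul_eq_mul, mul_div_cancel_right₀ s two_ne_zero]
  rw [htrace]
  constructor
  · calc
      A * C * Aᵀ * Y * (A * C * Aᵀ) = A * C * (Aᵀ * (Y * A * C)) * Aᵀ := by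
        simp only [Matrix.mul_assoc]
      _ = s • (A * C * Aᵀ) := by rw [hs, Matrix.mul_smul, Matrix.mul_one, smul_mul]
  · calc
      (1 - Y * (A * C * Aᵀ)).det = (1 - s • (1 : Matrix (Fin 2) (Fin 2) K)).det := by
        rw [hYX, det_one_sub_mul_comm, hs]
      _ = (1 - s) ^ 2 := by simp [det_fin_two, sq]

/-- For an anti-symmetric complex matrix `X` of rank 2 one has
`X X⋆ X = (tr(X⋆X)/2) • X` and `det(1 - X⋆X) = (1 - tr(X⋆X)/2)²`. -/
theorem antisymmetric_rank_two_identities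
    {n : ℕ} (X : Matrix (Fin n) (Fin n) ℂ)
    (hanti : Xᵀ = -X) (hrank : X.rank = 2) :
    X * Xᴴ * X = ((Xᴴ * X).trace / 2) • X ∧
    (1 - Xᴴ * X).det = (1 - (Xᴴ * X).trace / 2) ^ 2 :=
  antisymmetric_rank_two_identities_general hanti
    ((congrArg conjTranspose hanti).trans (conjTranspose_neg X)) hrank.le
end

section
/- Fix γ with 2γ ∈ ℕ and let M_γ = {−γ, −γ+1, …, γ}. For j ∈ ℂ set q_μ := −(j+μ)(j+μ+1) for μ ∈ M_γ. Then the numbers q_μ, μ ∈ M_γ, are pairwise distinct if and only if either j is not a half-integer (there is no k ∈ ℤ with j = k/2), or j is a half-integer satisfying j > γ − 1 or j < −γ. -/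
/-!
The polynomial `-x (x + 1)` is invariant under the reflection `x ↦ -1 - x` and takes each value at
most twice. Hence `q_μ = q_ν` with `μ ≠ ν` forces `2 * j = -(μ + ν + 1)`. Writing `μ = -γ + a` and
`ν = -γ + b` with naturals `a ≠ b` in `[0, 2γ]`, the sum `a + b` takes precisely the integer values
strictly between `0` and `4γ`, so collisions occur precisely when `2 * j = 2γ - 1 - (a + b)` is an
integer in `[-2γ, 2γ - 2]`.
-/

/-- The Casimir eigenvalue `-x (x + 1)` at spin `x`, with the sign convention for which `q_μ` is
`casimirEigenvalue (j + μ)`. -/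
def casimirEigenvalue {R : Type*} [CommRing R] (x : R) : R :=
  -(x * (x + 1))

/-- The set `M_γ = {-γ, -γ + 1, …, γ}`. It is described by a lower end and an upper bound, so that
`γ` itself belongs to it only if `2γ` is a natural number. -/
def weights (γ : ℚ) : Set ℚ :=
  {μ | (∃ a : ℕ, μ = -γ + a) ∧ μ ≤ γ}

theorem weights_eq_image_Iic {γ : ℚ} {n : ℕ} (hn : (n : ℚ) = 2 * γ) :
    weights γ = (fun a : ℕ ↦ -γ + (a : ℚ)) '' Set.Iic n := by
  have le_iff (a : ℕ) : -γ + (a : ℚ) ≤ γ ↔ a ≤ n := by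
    rw [← Nat.cast_le (α := ℚ), hn, two_mul, neg_add_le_iff_le_add]
  ext μ
  constructor
  · rintro ⟨⟨a, rfl⟩, ha⟩
    exact ⟨a, (le_iff a).1 ha, rfl⟩
  · rintro ⟨a, ha, rfl⟩
    exact ⟨⟨a, rfl⟩, (le_iff a).2 ha⟩

theorem exists_lt_le_add_eq {n : ℕ} {s : ℤ} (hs_pos : 0 < s) (hs_lt : s < 2 * n) :
    ∃ a b : ℕ, a < b ∧ b ≤ n ∧ (a + b : ℤ) = s := by
  rcases le_total s n with h | h
  · exact ⟨0, s.toNat, by omega, by omega, by omega⟩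
  · exact ⟨(s - n).toNat, n, by omega, le_rfl, by omega⟩

theorem not_exists_or_exists_and_iff_forall {α β : Type*} {f : α → β} (hf : Function.Injective f)
    {y : β} {p : α → Prop} :
    ((¬ ∃ k, y = f k) ∨ ∃ k, y = f k ∧ p k) ↔ ∀ k, y = f k → p k := by
  by_cases h : ∃ k, y = f k
  · obtain ⟨k, rfl⟩ := h
    simp [hf.eq_iff]
  · simp_all

section NoZeroDivisors

variable {R : Type*} [CommRing R] [NoZeroDivisors R]

theorem casimirEigenvalue_eq_iff {x y : R} :
    casimirEigenvalue x = casimirEigenvalue y ↔ x = y ∨ x + y + 1 = 0 := by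
  have sub_eq : casimirEigenvalue y - casimirEigenvalue x = (x - y) * (x + y + 1) := by
    unfold casimirEigenvalue
    ring
  rw [eq_comm, ← sub_eq_zero, sub_eq, mul_eq_zero, sub_eq_zero]

theorem injOn_casimirEigenvalue_add_natCast_iff [CharZero R] (x : R) (n : ℕ) :
    Set.InjOn (fun a : ℕ ↦ casimirEigenvalue (x + a)) (Set.Iic n) ↔
      ∀ k : ℤ, 2 * x + n = k → (n : ℤ) - 2 < k ∨ k < -(n : ℤ) := by
  constructor
  · intro inj k hk
    by_contra! hbound
    obtain ⟨a, b, hab, hbn, hsum⟩ :=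
      exists_lt_le_add_eq (n := n) (s := n - 1 - k) (by omega) (by omega)
    have hsum_cast : (a + b : R) = n - 1 - k := by exact_mod_cast congrArg (Int.cast : ℤ → R) hsum
    have reflected : (x + a) + (x + b) + 1 = 0 := by linear_combination hk + hsum_cast
    exact hab.ne (inj (hab.le.trans hbn) hbn (casimirEigenvalue_eq_iff.2 (.inr reflected)))
  · intro bound a ha b hb heq
    rw [Set.mem_Iic] at ha hb
    rcases casimirEigenvalue_eq_iff.1 heq with same | reflected
    · exact_mod_cast add_left_cancel same
    · have hk : 2 * x + n = ((n - 1 - a - b : ℤ) : R) := by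
        push_cast
        linear_combination reflected
      have := bound _ hk
      omega

end NoZeroDivisors

section CharZeroField

variable {K : Type*} [Field K] [CharZero K]

theorem intCast_div_two_injective : Function.Injective fun k : ℤ ↦ (k : K) / 2 :=
  fun _ _ h ↦ Int.cast_injective ((div_left_inj' two_ne_zero).1 h)

theorem injOn_casimirEigenvalue_weights_iff {γ : ℚ} {n : ℕ} (hn : (n : ℚ) = 2 * γ) (j : K) :
    Set.InjOn (fun μ : ℚ ↦ casimirEigenvalue (j + (μ : K))) (weights γ) ↔
      ∀ k : ℤ, j = (k : K) / 2 → (n : ℤ) - 2 < k ∨ k < -(n : ℤ) := by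
  have shift_injective : Function.Injective fun a : ℕ ↦ -γ + (a : ℚ) :=
    (add_right_injective (-γ)).comp Nat.cast_injective
  have shift_eq (a : ℕ) : j + ((-γ + a : ℚ) : K) = (j - γ) + a := by
    push_cast
    ring
  have hn_cast : (n : K) = 2 * γ := by exact_mod_cast congrArg (Rat.cast : ℚ → K) hn
  have ends_add : 2 * (j - γ) + n = j * 2 := by linear_combination hn_cast
  rw [weights_eq_image_Iic hn, ← shift_injective.injOn.comp_iff]
  simp only [Function.comp_def, shift_eq, injOn_casimirEigenvalue_add_natCast_iff, ends_add,
    eq_div_iff (two_ne_zero : (2 : K) ≠ 0)]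

theorem casimir_eigenvalues_distinct_iff_general {γ : ℚ} (hγ : ∃ n : ℕ, (n : ℚ) = 2 * γ) (j : K) :
    Set.InjOn (fun μ : ℚ ↦ casimirEigenvalue (j + (μ : K))) (weights γ) ↔
      ((¬ ∃ k : ℤ, j = (k : K) / 2) ∨
        ∃ k : ℤ, j = (k : K) / 2 ∧ ((k : ℚ) / 2 > γ - 1 ∨ (k : ℚ) / 2 < -γ)) := by
  obtain ⟨n, hn⟩ := hγ
  have lower_iff (k : ℤ) : (k : ℚ) / 2 > γ - 1 ↔ (n : ℤ) - 2 < k := by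
    rw [← Int.cast_lt (R := ℚ)]
    push_cast
    constructor <;> intro h <;> linarith
  have upper_iff (k : ℤ) : (k : ℚ) / 2 < -γ ↔ k < -(n : ℤ) := by
    rw [← Int.cast_lt (R := ℚ)]
    push_cast
    constructor <;> intro h <;> linarith
  simp only [lower_iff, upper_iff]
  rw [not_exists_or_exists_and_iff_forall intCast_div_two_injective]
  exact injOn_casimirEigenvalue_weights_iff hn j

end CharZeroField

/-- Fix a positive half-integer `γ` (`2γ ∈ ℕ`).  For `j ∈ ℂ` the numbers
`q_μ = -(j+μ)(j+μ+1)`, `μ ∈ M_γ = {-γ, -γ+1, …, γ}`, are pairwise distinct if and only if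
`j` is not a half-integer, or `j` is a half-integer with `j > γ - 1` or `j < -γ`. -/
theorem casimir_eigenvalues_distinct_iff
    (γ : ℚ) (hγ : ∃ k : ℕ, 0 < k ∧ (k : ℚ) = 2 * γ) (j : ℂ) :
    (∀ μ ν : ℚ, ((∃ a : ℕ, μ = -γ + a) ∧ μ ≤ γ) → ((∃ b : ℕ, ν = -γ + b) ∧ ν ≤ γ) →
      μ ≠ ν → -((j + (μ : ℂ)) * (j + (μ : ℂ) + 1)) ≠ -((j + (ν : ℂ)) * (j + (ν : ℂ) + 1))) ↔
    ((¬ ∃ k : ℤ, j = (k : ℂ) / 2) ∨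
      ∃ k : ℤ, j = (k : ℂ) / 2 ∧ ((k : ℚ) / 2 > γ - 1 ∨ (k : ℚ) / 2 < -γ)) := by
  rw [← casimir_eigenvalues_distinct_iff_general (hγ.imp fun _ h ↦ h.2)]
  exact ⟨fun H μ hμ ν hν ↦ not_imp_not.1 (H μ ν hμ hν), fun inj μ ν hμ hν ↦ mt (inj hμ hν)⟩
end

section
/- Let γ with 2γ ∈ ℕ, A ∈ {+1,−1}, λ a half-integer (2λ ∈ ℤ) and ρ ∈ ℂ with ρ ∉ ±(|λ|+ℕ) (i.e. ρ ≠ (|λ|+k) and ρ ≠ −(|λ|+k) for every integer k ≥ 1). Set M_γ = {−γ, −γ+1, …, γ}. Then the two conditions 'i(λ+μ)(ρ+Aμ) ≠ i(λ+ν)(ρ+Aν) for all μ ≠ ν in M_γ' and '(λ+μ)² + (ρ+Aμ)² − 1 ≠ (λ+ν)² + (ρ+Aν)² − 1 for all μ ≠ ν in M_γ' both hold if and only if ρ + Aλ is not equal to any integer m with −2γ < m < 2γ. -/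
/-!
Both eigenvalues are quadratic in the weight, and their differences at `x` and `y` share a factor:
they are `I * (x - y) * (ρ + A * l + A * (x + y))` and
`2 * A * (x - y) * (ρ + A * l + A * (x + y))`, the second because `A ^ 2 = 1`. So either eigenvalue
takes the same value at two distinct weights exactly when `ρ + A * l` is, up to sign, the sum of
those weights, and the sums of two distinct elements of `{-γ, …, γ}` are precisely the integers
strictly between `-2γ` and `2γ`.
-/

/-- The set `M_γ = {-γ, -γ + 1, …, γ}` of weights of spin `γ`, over which the eigenvalues are
indexed. It is defined for every rational `γ`; it ends at `γ` when `2γ` is a natural number. -/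
def spinWeights (γ : ℚ) : Set ℚ := {μ | (∃ a : ℕ, μ = -γ + a) ∧ μ ≤ γ}

/-- The eigenvalue of the first Casimir element at the weight `x`, with `l` standing for `λ`. -/
noncomputable def firstCasimirEigenvalue (A l ρ x : ℂ) : ℂ :=
  Complex.I * (l + x) * (ρ + A * x)

/-- The eigenvalue of the second Casimir element at the weight `x`, with `l` standing for `λ`. -/
def secondCasimirEigenvalue (A l ρ x : ℂ) : ℂ :=
  (l + x) ^ 2 + (ρ + A * x) ^ 2 - 1

lemma firstCasimirEigenvalue_sub (A l ρ x y : ℂ) :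
    firstCasimirEigenvalue A l ρ x - firstCasimirEigenvalue A l ρ y =
      Complex.I * (x - y) * (ρ + A * l + A * (x + y)) := by
  simp only [firstCasimirEigenvalue]
  ring

lemma secondCasimirEigenvalue_sub {A : ℂ} (hA : A ^ 2 = 1) (l ρ x y : ℂ) :
    secondCasimirEigenvalue A l ρ x - secondCasimirEigenvalue A l ρ y =
      2 * A * (x - y) * (ρ + A * l + A * (x + y)) := by
  simp only [secondCasimirEigenvalue]
  linear_combination -(x - y) * (2 * l + x + y) * hA

lemma exists_ne_le_add_eq_iff {k : ℕ} {n : ℤ} :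
    (∃ a ≤ k, ∃ b ≤ k, a ≠ b ∧ (a : ℤ) + b = n + k) ↔ -(k : ℤ) < n ∧ n < k := by
  constructor
  · rintro ⟨a, ha, b, hb, hab, hsum⟩
    omega
  · rintro ⟨h_lower, h_upper⟩
    rcases le_or_gt n 0 with hn | hn
    · exact ⟨0, by omega, (n + k).toNat, by omega, by omega, by omega⟩
    · exact ⟨k, le_rfl, n.toNat, by omega, by omega, by omega⟩

lemma mem_spinWeights_iff {γ : ℚ} {k : ℕ} (hk : (k : ℚ) = 2 * γ) {μ : ℚ} :
    μ ∈ spinWeights γ ↔ ∃ a : ℕ, a ≤ k ∧ μ = -γ + a := by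
  have le_iff (a : ℕ) : -γ + a ≤ γ ↔ a ≤ k := by
    rw [← Nat.cast_le (α := ℚ), hk, neg_add_le_iff_le_add, two_mul]
  constructor
  · rintro ⟨⟨a, rfl⟩, ha⟩
    exact ⟨a, (le_iff a).mp ha, rfl⟩
  · rintro ⟨a, ha, rfl⟩
    exact ⟨⟨a, rfl⟩, (le_iff a).mpr ha⟩

lemma exists_int_sign_mul_eq_iff {K : Type*} [Ring K] {A : K} (hA : A = 1 ∨ A = -1)
    {c : ℚ} {z : K} :
    (∃ m : ℤ, -c < m ∧ m < c ∧ A * z = m) ↔ ∃ m : ℤ, -c < m ∧ m < c ∧ z = m := by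
  rcases hA with rfl | rfl
  · simp only [one_mul]
  · rw [(Equiv.neg ℤ).exists_congr_left]
    simp only [Equiv.neg_symm, Equiv.neg_apply, Int.cast_neg, neg_mul, one_mul, neg_inj,
      neg_lt_neg_iff, neg_lt, ← and_assoc, and_comm]

lemma injOn_iff_forall_ne {α β : Type*} {f : α → β} {s : Set α} :
    Set.InjOn f s ↔ ∀ x y, x ∈ s → y ∈ s → x ≠ y → f x ≠ f y :=
  ⟨fun h _ _ hx hy => h.ne hx hy, fun h x hx y hy => not_imp_not.mp (h x y hx hy)⟩

section

variable {K : Type*} [Field K] [CharZero K]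

lemma exists_ne_spinWeights_add_eq_iff {γ : ℚ} (hγ : ∃ k : ℕ, (k : ℚ) = 2 * γ) {s : K} :
    (∃ μ ∈ spinWeights γ, ∃ ν ∈ spinWeights γ, μ ≠ ν ∧ (μ : K) + ν = s) ↔
      ∃ m : ℤ, -(2 * γ) < m ∧ m < 2 * γ ∧ s = m := by
  obtain ⟨k, hk⟩ := hγ
  have hk_cast : (k : K) = 2 * γ := mod_cast congrArg (Rat.cast : ℚ → K) hk
  have bounds_iff (m : ℤ) :
      -(2 * γ) < m ∧ m < 2 * γ ↔ ∃ a ≤ k, ∃ b ≤ k, a ≠ b ∧ (a : ℤ) + b = m + k := by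
    rw [exists_ne_le_add_eq_iff, ← hk]
    norm_cast
  constructor
  · rintro ⟨μ, hμ, ν, hν, hne, rfl⟩
    obtain ⟨a, ha, rfl⟩ := (mem_spinWeights_iff hk).mp hμ
    obtain ⟨b, hb, rfl⟩ := (mem_spinWeights_iff hk).mp hν
    have hab : a ≠ b := fun h => hne (by rw [h])
    obtain ⟨h_lower, h_upper⟩ :=
      (bounds_iff (a + b - k)).mpr ⟨a, ha, b, hb, hab, by ring⟩
    refine ⟨a + b - k, h_lower, h_upper, ?_⟩
    push_cast
    linear_combination hk_cast
  · rintro ⟨m, h_lower, h_upper, rfl⟩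
    obtain ⟨a, ha, b, hb, hab, hsum⟩ := (bounds_iff m).mp ⟨h_lower, h_upper⟩
    have hsum_cast : (a : K) + b = m + k := mod_cast congrArg (Int.cast : ℤ → K) hsum
    refine ⟨-γ + a, (mem_spinWeights_iff hk).mpr ⟨a, ha, rfl⟩,
      -γ + b, (mem_spinWeights_iff hk).mpr ⟨b, hb, rfl⟩, by simpa using hab, ?_⟩
    push_cast
    linear_combination hsum_cast + hk_cast

lemma injOn_spinWeights_iff {γ : ℚ} (hγ : ∃ k : ℕ, (k : ℚ) = 2 * γ) {A : K}
    (hA : A = 1 ∨ A = -1) {f : K → K} {c z : K} (hc : c ≠ 0)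
    (hf : ∀ x y, f x - f y = c * (x - y) * (z + A * (x + y))) :
    Set.InjOn (fun μ : ℚ => f μ) (spinWeights γ) ↔
      ¬ ∃ m : ℤ, -(2 * γ) < m ∧ m < 2 * γ ∧ z = m := by
  have hA_sq : A ^ 2 = 1 := sq_eq_one_iff.mpr hA
  have hA_neg : -A = 1 ∨ -A = -1 := by simpa [neg_eq_iff_eq_neg, or_comm] using hA
  have collision_iff {μ ν : ℚ} (hne : μ ≠ ν) : f μ = f ν ↔ (μ : K) + ν = -A * z := by
    have hsub : (μ : K) - ν ≠ 0 := sub_ne_zero.mpr (Rat.cast_injective.ne hne)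
    rw [← sub_eq_zero, hf, mul_eq_zero_iff_left (mul_ne_zero hc hsub)]
    constructor <;> intro h
    · linear_combination A * h - (μ + ν) * hA_sq
    · linear_combination A * h - z * hA_sq
  rw [← exists_int_sign_mul_eq_iff hA_neg, ← exists_ne_spinWeights_add_eq_iff hγ,
    injOn_iff_forall_ne]
  constructor
  · rintro h ⟨μ, hμ, ν, hν, hne, hsum⟩
    exact h μ ν hμ hν hne ((collision_iff hne).mpr hsum)
  · intro h μ ν hμ hν hne heq
    exact h ⟨μ, hμ, ν, hν, hne, (collision_iff hne).mp heq⟩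

end

theorem lorentz_casimir_eigenvalues_distinct_iff_general
    {γ : ℚ} (hγ : ∃ k : ℕ, (k : ℚ) = 2 * γ) {A : ℂ} (hA : A = 1 ∨ A = -1) (l ρ : ℂ) :
    (Set.InjOn (fun μ : ℚ => firstCasimirEigenvalue A l ρ μ) (spinWeights γ) ∧
      Set.InjOn (fun μ : ℚ => secondCasimirEigenvalue A l ρ μ) (spinWeights γ)) ↔
    ¬ ∃ m : ℤ, -(2 * γ) < (m : ℚ) ∧ (m : ℚ) < 2 * γ ∧ ρ + A * l = m := by
  have hA_sq : A ^ 2 = 1 := sq_eq_one_iff.mpr hA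
  have hA_ne : A ≠ 0 := by rcases hA with rfl | rfl <;> norm_num
  rw [injOn_spinWeights_iff hγ hA Complex.I_ne_zero (firstCasimirEigenvalue_sub A l ρ),
    injOn_spinWeights_iff hγ hA (mul_ne_zero two_ne_zero hA_ne)
      (secondCasimirEigenvalue_sub hA_sq l ρ),
    and_self]

/-- For a positive half-integer `γ`, a half-integer `l`, `A = ±1` and `ρ ∈ ℂ` with
`ρ ∉ ±(|l| + ℕ)`, the eigenvalue pairs `(i(l+μ)(ρ+Aμ), (l+μ)² + (ρ+Aμ)² - 1)`,
`μ ∈ M_γ`, are distinct in both components (for `μ ≠ ν`) if and only if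
`ρ + A·l` is not an integer in the open interval `(-2γ, 2γ)`. -/
theorem lorentz_casimir_eigenvalues_distinct_iff
    (γ l : ℚ) (hγ : ∃ k : ℕ, 0 < k ∧ (k : ℚ) = 2 * γ)
    (hl : ∃ k : ℤ, (k : ℚ) = 2 * l)
    (A : ℤ) (hA : A = 1 ∨ A = -1) (ρ : ℂ)
    (hρ : ∀ k : ℕ, 1 ≤ k → ρ ≠ ((|l| : ℚ) : ℂ) + (k : ℂ) ∧ ρ ≠ -(((|l| : ℚ) : ℂ) + (k : ℂ))) :
    ((∀ μ ν : ℚ, ((∃ a : ℕ, μ = -γ + a) ∧ μ ≤ γ) → ((∃ b : ℕ, ν = -γ + b) ∧ ν ≤ γ) → μ ≠ ν →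
        Complex.I * ((l : ℂ) + (μ : ℂ)) * (ρ + (A : ℂ) * (μ : ℂ)) ≠
        Complex.I * ((l : ℂ) + (ν : ℂ)) * (ρ + (A : ℂ) * (ν : ℂ))) ∧
     (∀ μ ν : ℚ, ((∃ a : ℕ, μ = -γ + a) ∧ μ ≤ γ) → ((∃ b : ℕ, ν = -γ + b) ∧ ν ≤ γ) → μ ≠ ν →
        ((l : ℂ) + (μ : ℂ)) ^ 2 + (ρ + (A : ℂ) * (μ : ℂ)) ^ 2 - 1 ≠
        ((l : ℂ) + (ν : ℂ)) ^ 2 + (ρ + (A : ℂ) * (ν : ℂ)) ^ 2 - 1)) ↔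
    ¬ ∃ m : ℤ, -(2 * γ) < (m : ℚ) ∧ (m : ℚ) < 2 * γ ∧ ρ + (A : ℂ) * (l : ℂ) = (m : ℂ) :=
  (and_congr injOn_iff_forall_ne.symm injOn_iff_forall_ne.symm).trans
    (lorentz_casimir_eigenvalues_distinct_iff_general (hγ.imp fun _ h => h.2) (mod_cast hA) l ρ)
end

section
/- Let n ≥ 1, η = fromBlocks 1ₙ 0 0 (−1ₙ) ∈ M_{2n}(ℂ), and let g ∈ M_{2n}(ℂ) satisfy g* η g = η. Write g = fromBlocks A B C D in n×n blocks. Then A and D are invertible, and det g = det D / det(A*). In particular this holds for every element of G^ε(2n), hence of SO*(2n) and Sp(2n,ℝ). -/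
open Matrix

/-- The indefinite Hermitian form `η = diag(1ₙ, -1ₙ)`. -/
noncomputable def eta (n : ℕ) : Matrix (Fin n ⊕ Fin n) (Fin n ⊕ Fin n) ℂ :=
  fromBlocks 1 0 0 (-1)

/-!
The diagonal blocks of `g* η g = η` give `A* A = 1 + C* C` and `D* D = 1 + B* B`. The right-hand
sides are positive definite, so `A` and `D` are invertible. With the off-diagonal relation
`A* B = C* D`, the first of these says that `(A*, -C*)` is the first block row of `g⁻¹`, so that
`fromBlocks A* (-C*) 0 1 * fromBlocks A B C D = fromBlocks 1 0 C D`;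
taking determinants gives `det A* * det g = det D`.
-/

section IndefiniteUnitary

variable {p q : Type*} [Fintype p] [Fintype q] [DecidableEq p]

theorem fromBlocks_conjTranspose_mul_signature_mul_self_eq_iff {R : Type*} [Ring R] [StarRing R]
    [DecidableEq q] {A : Matrix p p R} {B : Matrix p q R} {C : Matrix q p R} {D : Matrix q q R} :
    (fromBlocks A B C D)ᴴ * fromBlocks 1 0 0 (-1) * fromBlocks A B C D = fromBlocks 1 0 0 (-1) ↔
      Aᴴ * A = 1 + Cᴴ * C ∧ Aᴴ * B = Cᴴ * D ∧ Dᴴ * D = 1 + Bᴴ * B := by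
  have lower_left_iff : Bᴴ * A = Dᴴ * C ↔ Aᴴ * B = Cᴴ * D := by
    rw [← conjTranspose_inj]
    simp only [conjTranspose_mul, conjTranspose_conjTranspose]
  have lower_right_iff : Bᴴ * B - Dᴴ * D = -1 ↔ Dᴴ * D = 1 + Bᴴ * B := by
    rw [sub_eq_iff_eq_add, eq_neg_add_iff_add_eq, eq_comm]
  have product : (fromBlocks A B C D)ᴴ * fromBlocks 1 0 0 (-1) * fromBlocks A B C D =
      fromBlocks (Aᴴ * A - Cᴴ * C) (Aᴴ * B - Cᴴ * D) (Bᴴ * A - Dᴴ * C) (Bᴴ * B - Dᴴ * D) := by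
    simp [fromBlocks_conjTranspose, fromBlocks_multiply, sub_eq_add_neg]
  rw [product, fromBlocks_inj, sub_eq_iff_eq_add, sub_eq_zero, sub_eq_zero, lower_left_iff,
    lower_right_iff, and_self_left]

theorem isUnit_of_conjTranspose_mul_self_eq_one_add {K : Type*} [Field K] [PartialOrder K]
    [StarRing K] [StarOrderedRing K] {X : Matrix p p K} {Y : Matrix q p K}
    (h : Xᴴ * X = 1 + Yᴴ * Y) : IsUnit X := by
  have posDef_mul_self : (Xᴴ * X).PosDef :=
    h ▸ PosDef.one.add_posSemidef (posSemidef_conjTranspose_mul_self Y)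
  exact isUnit_of_mul_isUnit_right posDef_mul_self.isUnit

theorem det_fromBlocks_mul_det_of_leftInverse_row {R : Type*} [CommRing R] [DecidableEq q]
    {A P : Matrix p p R} {B Q : Matrix p q R} {C : Matrix q p R} {D : Matrix q q R}
    (h₁ : P * A + Q * C = 1) (h₂ : P * B + Q * D = 0) :
    (fromBlocks A B C D).det * P.det = D.det := by
  have factorization : fromBlocks P Q 0 1 * fromBlocks A B C D = fromBlocks 1 0 C D := by
    simp [fromBlocks_multiply, h₁, h₂]
  calc (fromBlocks A B C D).det * P.det
      = (fromBlocks P Q 0 1 * fromBlocks A B C D).det := by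
        rw [det_mul, det_fromBlocks_zero₂₁, det_one, mul_one, mul_comm]
    _ = D.det := by
        rw [factorization, det_fromBlocks_zero₁₂, det_one, one_mul]

theorem blocks_invertible_and_det_general {K : Type*} [Field K] [PartialOrder K] [StarRing K]
    [StarOrderedRing K] [DecidableEq q] (A : Matrix p p K) (B : Matrix p q K) (C : Matrix q p K)
    (D : Matrix q q K)
    (h : (fromBlocks A B C D)ᴴ * fromBlocks 1 0 0 (-1) * fromBlocks A B C D =
      fromBlocks 1 0 0 (-1)) :
    IsUnit A ∧ IsUnit D ∧ (fromBlocks A B C D).det = D.det / Aᴴ.det := by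
  obtain ⟨hAA, hAB, hDD⟩ := fromBlocks_conjTranspose_mul_signature_mul_self_eq_iff.mp h
  have isUnit_A : IsUnit A := isUnit_of_conjTranspose_mul_self_eq_one_add hAA
  have isUnit_D : IsUnit D := isUnit_of_conjTranspose_mul_self_eq_one_add hDD
  have det_mul_det : (fromBlocks A B C D).det * Aᴴ.det = D.det :=
    det_fromBlocks_mul_det_of_leftInverse_row (Q := -Cᴴ) (by simp [hAA]) (by simp [hAB])
  have det_ne_zero : Aᴴ.det ≠ 0 := ((isUnit_iff_isUnit_det _).mp isUnit_A.star).ne_zero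
  exact ⟨isUnit_A, isUnit_D, eq_div_of_mul_eq det_ne_zero det_mul_det⟩

end IndefiniteUnitary

/-- If `g* η g = η` with `g = fromBlocks A B C D`, then `A` and `D` are invertible and
`det g = det D / det (A*)`. -/
theorem blocks_invertible_and_det
    {n : ℕ} (hn : 1 ≤ n) (A B C D : Matrix (Fin n) (Fin n) ℂ)
    (h : (fromBlocks A B C D)ᴴ * eta n * fromBlocks A B C D = eta n) :
    IsUnit A ∧ IsUnit D ∧ (fromBlocks A B C D).det = D.det / Aᴴ.det :=
  open scoped ComplexOrder in blocks_invertible_and_det_general A B C D h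
end

section
/- Fix ε ∈ {+1,−1} and n ≥ 1, and let g = fromBlocks A B C D ∈ G^ε(2n). Then necessarily C = ε·conj(B) and D = conj(A). Conversely, if g = fromBlocks A B (ε·conj B) (conj A) satisfies g* η g = η and gᵀ J_ε g = J_ε, then det g = 1 holds automatically, so g ∈ G^ε(2n). -/
open Matrix

/-- Entrywise complex conjugation of a matrix. -/
noncomputable def mconj {n : ℕ} (M : Matrix (Fin n) (Fin n) ℂ) : Matrix (Fin n) (Fin n) ℂ :=
  M.map (starRingEnd ℂ)

/-- The bilinear form `J_ε` defining `G^ε(2n)` inside `SU(n,n)`. -/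
noncomputable def Jmat (n : ℕ) (ε : ℂ) : Matrix (Fin n ⊕ Fin n) (Fin n ⊕ Fin n) ℂ :=
  fromBlocks 0 1 (-(ε • (1 : Matrix (Fin n) (Fin n) ℂ))) 0

/-- Membership in `G^ε(2n)`: `det g = 1`, `g* η g = η` and `gᵀ J_ε g = J_ε`;
`G^{-1}(2n) = SO*(2n)` and `G^{+1}(2n) = Sp(2n,ℝ)`. -/
def Geps (n : ℕ) (ε : ℂ) (g : Matrix (Fin n ⊕ Fin n) (Fin n ⊕ Fin n) ℂ) : Prop :=
  g.det = 1 ∧ gᴴ * eta n * g = eta n ∧ gᵀ * Jmat n ε * g = Jmat n ε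

/-!
An `η`-unitary `g` has inverse `η g* η`, so `gᵀ J_ε g = J_ε` amounts to the linear condition
`gᵀ J_ε = J_ε (η g* η)`, whose blocks are the asserted relations between `A`, `B`, `C`, `D`.
For the determinant, multiplying `g` by the second block column of `η g* η`, completed by `(1, 0)`,
gives `det g * conj (det D) = det A`; when `D = conj A` this is `det g * det A = det A`, and
`det A ≠ 0` because `A* A = 1 + C* C` is positive definite.
-/

theorem eq_map_star_comm {l m R : Type*} [InvolutiveStar R] {A B : Matrix l m R} :
    A = B.map star ↔ B = A.map star := by
  simp only [← Matrix.ext_iff, map_apply, eq_star_iff_eq_star]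

theorem smul_eq_map_star_and_eq_smul_map_star_iff {l m R : Type*} [Ring R] [StarRing R] {ε : R}
    (hε : ε = 1 ∨ ε = -1) {B C : Matrix l m R} :
    ε • C = B.map star ∧ B = ε • C.map star ↔ C = ε • B.map star := by
  rcases hε with rfl | rfl
  · simp only [one_smul, eq_map_star_comm (A := B), and_self]
  · have hneg : B = -C.map star ↔ -C = B.map star := by
      rw [eq_map_star_comm, Matrix.map_neg star star_neg]
    simp only [neg_smul, one_smul, hneg, and_self, neg_eq_iff_eq_neg]

theorem det_map_star {m R : Type*} [Fintype m] [DecidableEq m] [CommRing R] [StarRing R]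
    (A : Matrix m m R) : (A.map star).det = star A.det :=
  ((starRingEnd R).map_det A).symm

section Forms

variable {m p q R : Type*} [DecidableEq m] [DecidableEq p] [DecidableEq q] [CommRing R]

variable (p q R) in
/-- The form `diag(1, -1)` of signature `(p, q)`, with the index types of the two blocks in place
of their sizes; `eta n` is the case `p = q = Fin n` over `ℂ`. -/
def signatureForm : Matrix (p ⊕ q) (p ⊕ q) R :=
  fromBlocks 1 0 0 (-1)

variable (m) in
/-- The form `J_ε` over any commutative ring, alternating for `ε = 1` and symmetric for `ε = -1`;
`Jmat n ε` is the case `m = Fin n` over `ℂ`. -/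
def epsilonForm (ε : R) : Matrix (m ⊕ m) (m ⊕ m) R :=
  fromBlocks 0 1 (-(ε • (1 : Matrix m m R))) 0

variable [Fintype m] [Fintype p] [Fintype q]

theorem signatureForm_mul_self : signatureForm p q R * signatureForm p q R = 1 := by
  simp [signatureForm, fromBlocks_multiply]

variable [StarRing R]

/-- Membership in the pseudo-unitary group `U(p, q)`, stated as preservation of
`signatureForm p q R`. -/
def IsPseudoUnitary (g : Matrix (p ⊕ q) (p ⊕ q) R) : Prop :=
  gᴴ * signatureForm p q R * g = signatureForm p q R

theorem signatureForm_mul_conjTranspose_fromBlocks_mul (A : Matrix p p R) (B : Matrix p q R)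
    (C : Matrix q p R) (D : Matrix q q R) :
    signatureForm p q R * (fromBlocks A B C D)ᴴ * signatureForm p q R =
      fromBlocks Aᴴ (-Cᴴ) (-Bᴴ) Dᴴ := by
  simp [signatureForm, fromBlocks_multiply, fromBlocks_conjTranspose]

namespace IsPseudoUnitary

theorem signatureForm_mul_conjTranspose_mul_mul_self {g : Matrix (p ⊕ q) (p ⊕ q) R}
    (hg : IsPseudoUnitary g) :
    signatureForm p q R * gᴴ * signatureForm p q R * g = 1 := by
  rw [mul_assoc, mul_assoc, ← mul_assoc gᴴ, hg, signatureForm_mul_self]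

theorem transpose_mul_mul_self_eq_iff {g : Matrix (p ⊕ q) (p ⊕ q) R} (hg : IsPseudoUnitary g)
    (M : Matrix (p ⊕ q) (p ⊕ q) R) :
    gᵀ * M * g = M ↔ gᵀ * M = M * (signatureForm p q R * gᴴ * signatureForm p q R) := by
  have hleft := hg.signatureForm_mul_conjTranspose_mul_mul_self
  have hright := mul_eq_one_comm.mp hleft
  constructor <;> intro h
  · rw [← mul_one (gᵀ * M), ← hright, ← mul_assoc, h]
  · rw [h, mul_assoc, hleft, mul_one]

theorem transpose_mul_epsilonForm_mul_eq_iff {A B C D : Matrix m m R}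
    (hg : IsPseudoUnitary (fromBlocks A B C D)) (ε : R) :
    (fromBlocks A B C D)ᵀ * epsilonForm m ε * fromBlocks A B C D = epsilonForm m ε ↔
      ε • C = B.map star ∧ B = ε • C.map star ∧ D = A.map star := by
  have hblocks : (fromBlocks A B C D)ᵀ * epsilonForm m ε =
      epsilonForm m ε * fromBlocks Aᴴ (-Cᴴ) (-Bᴴ) Dᴴ ↔
      ε • Cᵀ = Bᴴ ∧ Aᵀ = Dᴴ ∧ ε • Dᵀ = ε • Aᴴ ∧ Bᵀ = ε • Cᴴ := by
    simp [epsilonForm, fromBlocks_transpose, fromBlocks_multiply, fromBlocks_inj]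
  rw [hg.transpose_mul_mul_self_eq_iff, signatureForm_mul_conjTranspose_fromBlocks_mul, hblocks]
  simp only [conjTranspose, transpose_map, ← transpose_smul, transpose_inj]
  rw [eq_map_star_comm (A := A)]
  constructor
  · rintro ⟨hC, hD, -, hB⟩
    exact ⟨hC, hB, hD⟩
  · rintro ⟨hC, hB, hD⟩
    exact ⟨hC, hD, by rw [hD], hB⟩

theorem det_mul_star_det_lowerRight {A : Matrix p p R} {B : Matrix p q R} {C : Matrix q p R}
    {D : Matrix q q R} (hg : IsPseudoUnitary (fromBlocks A B C D)) :
    (fromBlocks A B C D).det * star D.det = A.det := by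
  have hinv : fromBlocks A B C D * fromBlocks Aᴴ (-Cᴴ) (-Bᴴ) Dᴴ = fromBlocks 1 0 0 1 := by
    rw [← signatureForm_mul_conjTranspose_fromBlocks_mul, fromBlocks_one, mul_eq_one_comm]
    exact hg.signatureForm_mul_conjTranspose_mul_mul_self
  rw [fromBlocks_multiply, fromBlocks_inj] at hinv
  obtain ⟨-, hupper, -, hlower⟩ := hinv
  have hmul : fromBlocks A B C D * fromBlocks 1 (-Cᴴ) 0 Dᴴ = fromBlocks A 0 C 1 := by
    rw [fromBlocks_multiply, hupper, hlower]
    simp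
  simpa [det_conjTranspose] using congrArg det hmul

end IsPseudoUnitary

end Forms

namespace IsPseudoUnitary

variable {p q m 𝕜 : Type*} [Fintype p] [DecidableEq p] [Fintype q] [DecidableEq q]
  [Fintype m] [DecidableEq m] [RCLike 𝕜]

open scoped ComplexOrder in
theorem det_upperLeft_ne_zero {A : Matrix p p 𝕜} {B : Matrix p q 𝕜} {C : Matrix q p 𝕜}
    {D : Matrix q q 𝕜} (hg : IsPseudoUnitary (fromBlocks A B C D)) : A.det ≠ 0 := by
  simp only [IsPseudoUnitary, signatureForm, fromBlocks_conjTranspose, fromBlocks_multiply,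
    fromBlocks_inj] at hg
  have hgram : Aᴴ * A = 1 + Cᴴ * C := by
    rw [← hg.1]
    simp
  have hpos : (Aᴴ * A).PosDef :=
    hgram ▸ PosDef.one.add_posSemidef (posSemidef_conjTranspose_mul_self C)
  have hdet : Aᴴ.det * A.det ≠ 0 := det_mul Aᴴ A ▸ hpos.det_pos.ne'
  exact right_ne_zero_of_mul hdet

theorem det_eq_one_of_eq_map_star {A B C D : Matrix m m 𝕜}
    (hg : IsPseudoUnitary (fromBlocks A B C D)) (hD : D = A.map star) :
    (fromBlocks A B C D).det = 1 := by
  have hdet : star D.det = A.det := by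
    rw [hD, det_map_star, star_star]
  have hfix : (fromBlocks A B C D).det * A.det = A.det := by
    simpa only [hdet] using hg.det_mul_star_det_lowerRight
  exact (mul_eq_right₀ hg.det_upperLeft_ne_zero).mp hfix

end IsPseudoUnitary

theorem Geps_block_form_general {m 𝕜 : Type*} [Fintype m] [DecidableEq m] [RCLike 𝕜]
    {ε : 𝕜} (hε : ε = 1 ∨ ε = -1) {A B C D : Matrix m m 𝕜}
    (hg : IsPseudoUnitary (fromBlocks A B C D)) :
    ((fromBlocks A B C D)ᵀ * epsilonForm m ε * fromBlocks A B C D = epsilonForm m ε ↔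
      C = ε • B.map star ∧ D = A.map star) ∧
    (D = A.map star → (fromBlocks A B C D).det = 1) := by
  refine ⟨?_, hg.det_eq_one_of_eq_map_star⟩
  rw [hg.transpose_mul_epsilonForm_mul_eq_iff, ← and_assoc,
    smul_eq_map_star_and_eq_smul_map_star_iff hε]

/-- Any `g = fromBlocks A B C D ∈ G^ε(2n)` has `C = ε·conj B` and `D = conj A`; conversely,
for a matrix of this block form satisfying the `η`- and `J_ε`-invariance conditions,
`det g = 1` holds automatically, so `g ∈ G^ε(2n)`. -/
theorem Geps_block_form
    {n : ℕ} (hn : 1 ≤ n) (ε : ℂ) (hε : ε = 1 ∨ ε = -1) :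
    (∀ A B C D : Matrix (Fin n) (Fin n) ℂ, Geps n ε (fromBlocks A B C D) →
      C = ε • mconj B ∧ D = mconj A) ∧
    (∀ A B : Matrix (Fin n) (Fin n) ℂ,
      (fromBlocks A B (ε • mconj B) (mconj A))ᴴ * eta n *
        fromBlocks A B (ε • mconj B) (mconj A) = eta n →
      (fromBlocks A B (ε • mconj B) (mconj A))ᵀ * Jmat n ε *
        fromBlocks A B (ε • mconj B) (mconj A) = Jmat n ε →
      Geps n ε (fromBlocks A B (ε • mconj B) (mconj A))) := by
  exact ⟨fun _ _ _ _ ⟨_, hη, hJ⟩ => (Geps_block_form_general hε hη).1.mp hJ,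
    fun _ _ hη hJ => ⟨(Geps_block_form_general hε hη).2 rfl, hη, hJ⟩⟩
end

section
/- Fix ε ∈ {+1,−1} and n ≥ 1. (i) For every ζ ∈ Ω^ε_n, the block matrix g_ζ = fromBlocks S (ζ·T) (ζ*·S) T, where S is the unique positive-definite square root of (1ₙ − ζζ*)⁻¹ and T the unique positive-definite square root of (1ₙ − ζ*ζ)⁻¹, belongs to G^ε(2n) and satisfies g_ζ(0) = (ζ·T)·T⁻¹ = ζ. (ii) Consequently the action of G^ε(2n) on Ω^ε_n is transitive: for all ζ, ω ∈ Ω^ε_n there exists g = fromBlocks A B C D ∈ G^ε(2n) with Cζ+D invertible and (Aζ+B)(Cζ+D)⁻¹ = ω. -/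
open Matrix ComplexOrder

/-!
A matrix `g` carries `ζ` to `ω` by fractional linear action when it carries the column span of
`(ζ; 1)` onto that of `(ω; 1)`, so the action law and the passage to inverses are matrix
associativity, and transitivity reduces to moving the base point `0` to an arbitrary `ζ`.
This is done by `g_ζ = fromBlocks 1 ζ ζᴴ 1 * fromBlocks S 0 0 T`: congruence by the first factor
replaces the identity blocks of `η` and `J_ε` by `1 - ζζ*` and `1 - ζ*ζ`, and the square roots in
the second factor normalise these back. For `J_ε` and the determinant one needs in addition that
`S` is the transpose of `T`; as `ζᵀ = ± ζ` makes `1 - ζζ*` the transpose of `1 - ζ*ζ`, this is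
uniqueness of positive square roots.
-/

section Monoid

variable {M : Type*} [Monoid M] {a a' b b' J : M}

theorem mul_mul_mul_eq_of_mul_mul_eq (ha : a' * J * a = J) (hb : b' * J * b = J) :
    b' * a' * J * (a * b) = J := by
  calc b' * a' * J * (a * b) = b' * (a' * J * a) * b := by simp only [mul_assoc]
    _ = J := by rw [ha, hb]

theorem mul_mul_eq_of_mul_eq_one (ha : a' * J * a = J) (hab : a * b = 1) (hba : b' * a' = 1) :
    b' * J * b = J := by
  calc b' * J * b = b' * (a' * J * a) * b := by rw [ha]
    _ = b' * a' * J * (a * b) := by simp only [mul_assoc]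
    _ = J := by rw [hab, hba, one_mul, mul_one]

end Monoid

namespace Geps

variable {n : ℕ} {ε : ℂ} {g h : Matrix (Fin n ⊕ Fin n) (Fin n ⊕ Fin n) ℂ}

theorem isUnit_det (hg : Geps n ε g) : IsUnit g.det :=
  hg.1 ▸ isUnit_one

theorem mul (hg : Geps n ε g) (hh : Geps n ε h) : Geps n ε (g * h) := by
  obtain ⟨hg_det, hg_eta, hg_J⟩ := hg
  obtain ⟨hh_det, hh_eta, hh_J⟩ := hh
  refine ⟨by rw [det_mul, hg_det, hh_det, one_mul], ?_, ?_⟩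
  · rw [conjTranspose_mul, mul_mul_mul_eq_of_mul_mul_eq hg_eta hh_eta]
  · rw [transpose_mul, mul_mul_mul_eq_of_mul_mul_eq hg_J hh_J]

theorem inv (hg : Geps n ε g) : Geps n ε g⁻¹ := by
  have hinv : g * g⁻¹ = 1 := mul_nonsing_inv g hg.isUnit_det
  obtain ⟨hg_det, hg_eta, hg_J⟩ := hg
  refine ⟨by simp [det_nonsing_inv, hg_det], ?_, ?_⟩
  · exact mul_mul_eq_of_mul_eq_one hg_eta hinv
      (by rw [← conjTranspose_mul, hinv, conjTranspose_one])
  · exact mul_mul_eq_of_mul_eq_one hg_J hinv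
      (by rw [← transpose_mul, hinv, transpose_one])

end Geps

section MoebiusMapsTo

variable {m n R : Type*} [Fintype m] [Fintype n] [DecidableEq n] [CommRing R]

/-- The fractional linear action of `g` carries `ζ` to `ω`, expressed projectively: `g` maps the
graph `(ζ; 1)` to the graph `(ω; 1)` up to an invertible automorphy factor `j`. -/
def MoebiusMapsTo (g : Matrix (m ⊕ n) (m ⊕ n) R) (ζ ω : Matrix m n R) : Prop :=
  ∃ j : Matrix n n R,
    IsUnit j ∧ g * fromRows ζ (1 : Matrix n n R) = fromRows ω (1 : Matrix n n R) * j

theorem moebiusMapsTo_fromBlocks_iff {A : Matrix m m R} {B : Matrix m n R} {C : Matrix n m R}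
    {D : Matrix n n R} {ζ ω : Matrix m n R} :
    MoebiusMapsTo (fromBlocks A B C D) ζ ω ↔
      IsUnit (C * ζ + D) ∧ (A * ζ + B) * (C * ζ + D)⁻¹ = ω := by
  simp only [MoebiusMapsTo, fromBlocks_mul_fromRows, fromRows_mul, fromRows_ext_iff,
    Matrix.mul_one, Matrix.one_mul]
  constructor
  · rintro ⟨j, hj, hnum, rfl⟩
    exact ⟨hj, by rw [hnum, mul_nonsing_inv_cancel_right _ _ ((isUnit_iff_isUnit_det _).mp hj)]⟩
  · rintro ⟨hj, rfl⟩
    exact ⟨_, hj, by rw [nonsing_inv_mul_cancel_right _ _ ((isUnit_iff_isUnit_det _).mp hj)], rfl⟩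

namespace MoebiusMapsTo

variable {g h : Matrix (m ⊕ n) (m ⊕ n) R} {ζ ω ξ : Matrix m n R}

theorem mul (hg : MoebiusMapsTo g ω ξ) (hh : MoebiusMapsTo h ζ ω) :
    MoebiusMapsTo (g * h) ζ ξ := by
  obtain ⟨j, hj, hgj⟩ := hg
  obtain ⟨k, hk, hhk⟩ := hh
  exact ⟨j * k, hj.mul hk, by rw [Matrix.mul_assoc, hhk, ← Matrix.mul_assoc, hgj, Matrix.mul_assoc]⟩

theorem inv [DecidableEq m] (hg : MoebiusMapsTo g ζ ω) (hdet : IsUnit g.det) :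
    MoebiusMapsTo g⁻¹ ω ζ := by
  obtain ⟨j, hj, hgj⟩ := hg
  refine ⟨j⁻¹, isUnit_nonsing_inv_iff.mpr hj, ?_⟩
  calc g⁻¹ * fromRows ω (1 : Matrix n n R)
      = g⁻¹ * (fromRows ω (1 : Matrix n n R) * j) * j⁻¹ := by
        rw [Matrix.mul_assoc, mul_nonsing_inv_cancel_right _ _ ((isUnit_iff_isUnit_det j).mp hj)]
    _ = fromRows ζ (1 : Matrix n n R) * j⁻¹ := by rw [← hgj, nonsing_inv_mul_cancel_left _ _ hdet]

end MoebiusMapsTo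

end MoebiusMapsTo

section Boost

variable {m n R : Type*} [Fintype m] [Fintype n]

/-- The matrix `g_ζ` carrying `0` to `ζ`, with its diagonal blocks `S` and `T` left free. -/
def boost [Ring R] [Star R] (ζ : Matrix m n R) (S : Matrix m m R) (T : Matrix n n R) :
    Matrix (m ⊕ n) (m ⊕ n) R :=
  fromBlocks S (ζ * T) (ζᴴ * S) T

theorem boost_eq_mul [DecidableEq m] [DecidableEq n] [Ring R] [Star R] (ζ : Matrix m n R)
    (S : Matrix m m R) (T : Matrix n n R) :
    boost ζ S T = fromBlocks 1 ζ ζᴴ 1 * fromBlocks S 0 0 T := by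
  simp [boost, fromBlocks_multiply]

theorem moebiusMapsTo_boost_zero [DecidableEq n] [CommRing R] [Star R] (ζ : Matrix m n R)
    (S : Matrix m m R) {T : Matrix n n R} (hT : IsUnit T) : MoebiusMapsTo (boost ζ S T) 0 ζ :=
  ⟨T, hT, by simp [boost, fromBlocks_mul_fromRows, fromRows_mul]⟩

theorem conjTranspose_boost_mul_mul_boost [DecidableEq m] [DecidableEq n] [Ring R] [StarRing R]
    (ζ : Matrix m n R) (S : Matrix m m R) (T : Matrix n n R) :
    (boost ζ S T)ᴴ * fromBlocks 1 0 0 (-1) * boost ζ S T =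
      fromBlocks (Sᴴ * (1 - ζ * ζᴴ) * S) 0 0 (-(Tᴴ * (1 - ζᴴ * ζ) * T)) := by
  have hshear : (fromBlocks 1 ζ ζᴴ 1)ᴴ * fromBlocks 1 0 0 (-1) * fromBlocks 1 ζ ζᴴ 1 =
      fromBlocks (1 - ζ * ζᴴ) 0 0 (-(1 - ζᴴ * ζ)) := by
    simp [fromBlocks_conjTranspose, fromBlocks_multiply, sub_eq_add_neg]
  calc (boost ζ S T)ᴴ * fromBlocks 1 0 0 (-1) * boost ζ S T
      = (fromBlocks S 0 0 T)ᴴ * ((fromBlocks 1 ζ ζᴴ 1)ᴴ * fromBlocks 1 0 0 (-1) *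
          fromBlocks 1 ζ ζᴴ 1) * fromBlocks S 0 0 T := by
        simp only [boost_eq_mul, conjTranspose_mul, Matrix.mul_assoc]
    _ = fromBlocks (Sᴴ * (1 - ζ * ζᴴ) * S) 0 0 (-(Tᴴ * (1 - ζᴴ * ζ) * T)) := by
        rw [hshear]
        simp only [fromBlocks_conjTranspose, fromBlocks_multiply, conjTranspose_zero,
          Matrix.mul_zero, Matrix.zero_mul, add_zero, zero_add, Matrix.mul_neg, Matrix.neg_mul,
          neg_zero]

theorem det_boost [DecidableEq m] [DecidableEq n] [CommRing R] [Star R] (ζ : Matrix m n R)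
    (S : Matrix m m R) (T : Matrix n n R) :
    (boost ζ S T).det = (1 - ζᴴ * ζ).det * (S.det * T.det) := by
  rw [boost_eq_mul, det_mul, det_fromBlocks_one₁₁, det_fromBlocks_zero₂₁]

end Boost

section TransposeEqSMul

variable {n R : Type*} [CommRing R] [StarRing R] {ε : R} {ζ : Matrix n n R}

theorem transpose_conjTranspose_of_transpose_eq_smul (hζ : ζᵀ = ε • ζ) :
    ζᴴᵀ = star ε • ζᴴ := by
  rw [← conjTranspose_smul, ← hζ]
  rfl

variable [Fintype n] [DecidableEq n]

theorem transpose_one_sub_conjTranspose_mul_self (hε : star ε * ε = 1) (hζ : ζᵀ = ε • ζ) :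
    (1 - ζᴴ * ζ)ᵀ = 1 - ζ * ζᴴ := by
  simp [transpose_sub, transpose_mul, transpose_conjTranspose_of_transpose_eq_smul hζ, hζ,
    smul_smul, hε]

theorem transpose_boost_mul_mul_boost (hε : star ε * ε = 1) (hζ : ζᵀ = ε • ζ)
    (S T : Matrix n n R) :
    (boost ζ S T)ᵀ * fromBlocks 0 1 (-(ε • 1)) 0 * boost ζ S T =
      fromBlocks 0 (Sᵀ * (1 - ζᴴ * ζ) * T) (-(ε • (Tᵀ * (1 - ζ * ζᴴ) * S))) 0 := by
  have hshear : (fromBlocks 1 ζ ζᴴ 1)ᵀ * fromBlocks 0 1 (-(ε • 1)) 0 * fromBlocks 1 ζ ζᴴ 1 =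
      fromBlocks 0 (1 - ζᴴ * ζ) (-(ε • (1 - ζ * ζᴴ))) 0 := by
    simp [fromBlocks_transpose, fromBlocks_multiply, hζ, smul_smul, mul_comm ε, hε,
      transpose_conjTranspose_of_transpose_eq_smul hζ, sub_eq_add_neg, add_comm]
  calc (boost ζ S T)ᵀ * fromBlocks 0 1 (-(ε • 1)) 0 * boost ζ S T
      = (fromBlocks S 0 0 T)ᵀ * ((fromBlocks 1 ζ ζᴴ 1)ᵀ * fromBlocks 0 1 (-(ε • 1)) 0 *
          fromBlocks 1 ζ ζᴴ 1) * fromBlocks S 0 0 T := by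
        simp only [boost_eq_mul, transpose_mul, Matrix.mul_assoc]
    _ = fromBlocks 0 (Sᵀ * (1 - ζᴴ * ζ) * T) (-(ε • (Tᵀ * (1 - ζ * ζᴴ) * S))) 0 := by
        rw [hshear]
        simp [fromBlocks_transpose, fromBlocks_multiply]

end TransposeEqSMul

theorem geps_boost {n : ℕ} {ε : ℂ} {ζ T : Matrix (Fin n) (Fin n) ℂ} (hε : star ε * ε = 1)
    (hζ : ζᵀ = ε • ζ) (hT : T.IsHermitian) (hT_norm : T * (1 - ζᴴ * ζ) * T = 1) :
    Geps n ε (boost ζ Tᵀ T) := by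
  have hS_norm : Tᵀ * (1 - ζ * ζᴴ) * Tᵀ = 1 := by
    simpa only [transpose_mul, transpose_one, transpose_one_sub_conjTranspose_mul_self hε hζ,
      ← Matrix.mul_assoc] using congrArg transpose hT_norm
  refine ⟨?_, ?_, ?_⟩
  · calc (boost ζ Tᵀ T).det = (T * (1 - ζᴴ * ζ) * T).det := by
          rw [det_boost, det_transpose, det_mul, det_mul]
          ring
      _ = 1 := by rw [hT_norm, det_one]
  · rw [eta, conjTranspose_boost_mul_mul_boost, hT.transpose.eq, hT.eq, hS_norm, hT_norm]
  · rw [Jmat, transpose_boost_mul_mul_boost hε hζ, transpose_transpose, hT_norm, hS_norm]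

section SquareRoot

theorem mul_mul_self_eq_one_of_mul_self_eq_inv {n R : Type*} [Fintype n] [DecidableEq n]
    [CommRing R] {P S : Matrix n n R} (hP : IsUnit P) (hS : S * S = P⁻¹) : S * P * S = 1 := by
  rw [mul_eq_one_comm, ← Matrix.mul_assoc, hS, nonsing_inv_mul P ((isUnit_iff_isUnit_det P).mp hP)]

variable {n 𝕜 : Type*} [Fintype n] [RCLike 𝕜] {P S T : Matrix n n 𝕜}

open scoped MatrixOrder in
theorem eq_of_mul_self_eq_of_posSemidef (hS : S.PosSemidef) (hT : T.PosSemidef)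
    (h : S * S = T * T) : S = T := by
  classical exact (CFC.mul_self_eq_mul_self_iff S T hS.nonneg hT.nonneg).mp h

open scoped MatrixOrder in
theorem exists_posDef_mul_self_eq (hP : P.PosDef) :
    ∃ T : Matrix n n 𝕜, T.PosDef ∧ T * T = P := by
  classical
  exact ⟨CFC.sqrt P, (IsStrictlyPositive.sqrt P hP.isStrictlyPositive).posDef,
    CFC.sqrt_mul_sqrt_self P hP.posSemidef.nonneg⟩

theorem eq_transpose_of_mul_self_eq_inv [DecidableEq n] {ε : 𝕜} {ζ : Matrix n n 𝕜}
    (hε : star ε * ε = 1) (hζ : ζᵀ = ε • ζ)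
    (hS : S.PosSemidef) (hSS : S * S = (1 - ζ * ζᴴ)⁻¹)
    (hT : T.PosSemidef) (hTT : T * T = (1 - ζᴴ * ζ)⁻¹) : S = Tᵀ := by
  refine eq_of_mul_self_eq_of_posSemidef hS hT.transpose ?_
  rw [hSS, ← transpose_mul, hTT, transpose_nonsing_inv,
    transpose_one_sub_conjTranspose_mul_self hε hζ]

end SquareRoot

theorem exists_geps_moebiusMapsTo_zero {n : ℕ} {ε : ℂ} {ζ : Matrix (Fin n) (Fin n) ℂ}
    (hε : star ε * ε = 1) (hζ : ζᵀ = ε • ζ) (hζ_pos : (1 - ζᴴ * ζ).PosDef) :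
    ∃ g, Geps n ε g ∧ MoebiusMapsTo g 0 ζ := by
  obtain ⟨T, hT, hTT⟩ := exists_posDef_mul_self_eq hζ_pos.inv
  have hT_norm := mul_mul_self_eq_one_of_mul_self_eq_inv hζ_pos.isUnit hTT
  exact ⟨boost ζ Tᵀ T, geps_boost hε hζ hT.isHermitian hT_norm,
    moebiusMapsTo_boost_zero ζ Tᵀ hT.isUnit⟩

/-- (i) For `ζ ∈ Ω^ε_n`, with `S` (resp. `T`) the positive-definite square root of
`(1 - ζζ*)⁻¹` (resp. `(1 - ζ*ζ)⁻¹`), the matrix `g_ζ = fromBlocks S (ζT) (ζ*S) T`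
belongs to `G^ε(2n)` and sends `0` to `(ζT)T⁻¹ = ζ`.
(ii) Consequently `G^ε(2n)` acts transitively on `Ω^ε_n`. -/
theorem Geps_transitive
    {n : ℕ} (hn : 1 ≤ n) (ε : ℂ) (hε : ε = 1 ∨ ε = -1) :
    (∀ ζ S T : Matrix (Fin n) (Fin n) ℂ,
      ζᵀ = ε • ζ → ((1 : Matrix (Fin n) (Fin n) ℂ) - ζᴴ * ζ).PosDef →
      S.PosDef → S * S = ((1 : Matrix (Fin n) (Fin n) ℂ) - ζ * ζᴴ)⁻¹ →
      T.PosDef → T * T = ((1 : Matrix (Fin n) (Fin n) ℂ) - ζᴴ * ζ)⁻¹ →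
      Geps n ε (fromBlocks S (ζ * T) (ζᴴ * S) T) ∧ (ζ * T) * T⁻¹ = ζ) ∧
    (∀ ζ ω : Matrix (Fin n) (Fin n) ℂ,
      ζᵀ = ε • ζ → ((1 : Matrix (Fin n) (Fin n) ℂ) - ζᴴ * ζ).PosDef →
      ωᵀ = ε • ω → ((1 : Matrix (Fin n) (Fin n) ℂ) - ωᴴ * ω).PosDef →
      ∃ A B C D : Matrix (Fin n) (Fin n) ℂ,
        Geps n ε (fromBlocks A B C D) ∧ IsUnit (C * ζ + D) ∧
        (A * ζ + B) * (C * ζ + D)⁻¹ = ω) := by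
  have hε_unitary : star ε * ε = 1 := by rcases hε with rfl | rfl <;> simp
  constructor
  · intro ζ S T hζ hζ_pos hS hSS hT hTT
    obtain rfl : S = Tᵀ :=
      eq_transpose_of_mul_self_eq_inv hε_unitary hζ hS.posSemidef hSS hT.posSemidef hTT
    have hT_norm := mul_mul_self_eq_one_of_mul_self_eq_inv hζ_pos.isUnit hTT
    exact ⟨geps_boost hε_unitary hζ hT.isHermitian hT_norm,
      mul_nonsing_inv_cancel_right _ _ ((isUnit_iff_isUnit_det T).mp hT.isUnit)⟩
  · intro ζ ω hζ hζ_pos hω hω_pos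
    obtain ⟨g, hg, hgζ⟩ := exists_geps_moebiusMapsTo_zero hε_unitary hζ hζ_pos
    obtain ⟨h, hh, hhω⟩ := exists_geps_moebiusMapsTo_zero hε_unitary hω hω_pos
    have hmem : Geps n ε (h * g⁻¹) := hh.mul hg.inv
    have hmaps : MoebiusMapsTo (h * g⁻¹) ζ ω := hhω.mul (hgζ.inv hg.isUnit_det)
    rw [← fromBlocks_toBlocks (h * g⁻¹)] at hmem hmaps
    exact ⟨_, _, _, _, hmem, moebiusMapsTo_fromBlocks_iff.mp hmaps⟩
end

section
/- Let g = fromBlocks A B (−conj B) (conj A) ∈ SO*(2n), so A, B ∈ Mₙ(ℂ) satisfy AA* − BB* = 1ₙ, A*A − Bᵀ·conj(B) = 1ₙ, A*B = −Bᵀ·conj(A), BAᵀ = −ABᵀ (whence A is invertible). Then B·conj(A)⁻¹ and conj(A)⁻¹·conj(B) are anti-symmetric, (A*)⁻¹ − B·conj(A)⁻¹·conj(B) = A, and g admits the block UDL factorization g = (fromBlocks 1ₙ (B·conj(A)⁻¹) 0 1ₙ) · (fromBlocks (A*)⁻¹ 0 0 (conj A)) · (fromBlocks 1ₙ 0 (−conj(A)⁻¹·conj(B))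 1ₙ). -/
open Matrix

/-!
Put `C = -conj B` and `D = conj A`. The relations `Aᴴ A - Bᵀ conj B = 1` and `Aᴴ B = -Bᵀ conj A`,
with the conjugate of the latter, say that `g` preserves the split symmetric form: `gᵀ K g = K` for
`K = fromBlocks 0 1 1 0`. For such a `g` with `D` invertible, the block equations turn the Schur
complement `A - B D⁻¹ C` into `(Dᵀ)⁻¹` and make `B D⁻¹` and `D⁻¹ C` anti-symmetric. Invertibility of
`A`, and hence of `D`, comes from positivity: `Aᴴ A` is `1` plus a positive semidefinite matrix.
-/

section CommRing

variable {m R : Type*} [Fintype m] [DecidableEq m] [CommRing R] {A B C D : Matrix m m R}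

theorem transpose_mul_inv_eq_neg (hD : IsUnit D) (hBD : Dᵀ * B = -(Bᵀ * D)) :
    (B * D⁻¹)ᵀ = -(B * D⁻¹) := by
  have := hD.invertible
  calc (B * D⁻¹)ᵀ = (Dᵀ)⁻¹ * (Bᵀ * D) * D⁻¹ := by
        rw [transpose_mul, transpose_nonsing_inv, Matrix.mul_assoc,
          mul_inv_cancel_right_of_invertible]
    _ = -(B * D⁻¹) := by
        rw [← neg_eq_iff_eq_neg.mpr hBD, Matrix.mul_neg, inv_mul_cancel_left_of_invertible,
          Matrix.neg_mul]

theorem sub_mul_inv_mul_eq_inv_transpose (hD : IsUnit D) (hAD : Dᵀ * A + Bᵀ * C = 1)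
    (hBD : Dᵀ * B = -(Bᵀ * D)) : A - B * D⁻¹ * C = (Dᵀ)⁻¹ := by
  have := hD.invertible
  refine (inv_eq_right_inv ?_).symm
  calc Dᵀ * (A - B * D⁻¹ * C) = Dᵀ * A - Dᵀ * B * D⁻¹ * C := by
        simp only [Matrix.mul_sub, Matrix.mul_assoc]
    _ = Dᵀ * A + Bᵀ * C := by
        rw [hBD, Matrix.neg_mul, Matrix.neg_mul, mul_inv_cancel_right_of_invertible,
          sub_neg_eq_add]
    _ = 1 := hAD

theorem transpose_inv_mul_eq_neg (hD : IsUnit D) (hAC : Aᵀ * C = -(Cᵀ * A))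
    (hAD : Dᵀ * A + Bᵀ * C = 1) (hBD : Dᵀ * B = -(Bᵀ * D)) :
    (D⁻¹ * C)ᵀ = -(D⁻¹ * C) := by
  have hCA : (Cᵀ * A)ᵀ = -(Cᵀ * A) := by rw [transpose_mul, transpose_transpose, hAC]
  have hCXC : (Cᵀ * (B * D⁻¹) * C)ᵀ = -(Cᵀ * (B * D⁻¹) * C) := by
    rw [transpose_mul, transpose_mul, transpose_transpose, transpose_mul_inv_eq_neg hD hBD,
      Matrix.neg_mul, Matrix.mul_neg, Matrix.mul_assoc Cᵀ]
  have hDC : (D⁻¹ * C)ᵀ = Cᵀ * A - Cᵀ * (B * D⁻¹) * C := by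
    rw [transpose_mul, transpose_nonsing_inv, ← sub_mul_inv_mul_eq_inv_transpose hD hAD hBD,
      Matrix.mul_sub, Matrix.mul_assoc Cᵀ]
  calc (D⁻¹ * C)ᵀ = -(D⁻¹ * C)ᵀᵀ := by
        rw [hDC, transpose_sub, hCA, hCXC, ← neg_sub', neg_neg]
    _ = -(D⁻¹ * C) := by rw [transpose_transpose]

theorem fromBlocks_eq_mul_inv_transpose_mul (hD : IsUnit D) (hAD : Dᵀ * A + Bᵀ * C = 1)
    (hBD : Dᵀ * B = -(Bᵀ * D)) :
    fromBlocks A B C D =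
      fromBlocks 1 (B * D⁻¹) 0 1 * fromBlocks (Dᵀ)⁻¹ 0 0 D * fromBlocks 1 0 (D⁻¹ * C) 1 := by
  have := hD.invertible
  rw [← sub_mul_inv_mul_eq_inv_transpose hD hAD hBD, ← invOf_eq_nonsing_inv]
  exact fromBlocks_eq_of_invertible₂₂ A B C D

end CommRing

section StarOrderedField

variable {m K : Type*} [Fintype m] [DecidableEq m] [Field K] [PartialOrder K] [StarRing K]
  [StarOrderedRing K]

theorem isUnit_of_conjTranspose_mul_self_sub_eq_one {n : Type*} [Fintype n] {A : Matrix m m K}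
    {B : Matrix n m K} (h : Aᴴ * A - Bᴴ * B = 1) : IsUnit A := by
  have hpos : (Aᴴ * A).PosDef := by
    rw [sub_eq_iff_eq_add.mp h]
    exact PosDef.one.add_posSemidef (posSemidef_conjTranspose_mul_self B)
  exact isUnit_of_mul_isUnit_right hpos.isUnit

theorem so_star_UDL_general {A B : Matrix m m K} (hAA : Aᴴ * A - Bᵀ * B.map star = 1)
    (hAB : Aᴴ * B = -(Bᵀ * A.map star)) :
    IsUnit A ∧
    (B * (A.map star)⁻¹)ᵀ = -(B * (A.map star)⁻¹) ∧
    ((A.map star)⁻¹ * B.map star)ᵀ = -((A.map star)⁻¹ * B.map star) ∧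
    (Aᴴ)⁻¹ - B * (A.map star)⁻¹ * B.map star = A ∧
    fromBlocks A B (-(B.map star)) (A.map star) =
      fromBlocks 1 (B * (A.map star)⁻¹) 0 1 *
      fromBlocks (Aᴴ)⁻¹ 0 0 (A.map star) *
      fromBlocks 1 0 (-((A.map star)⁻¹ * B.map star)) 1 := by
  have hDt : (A.map star)ᵀ = Aᴴ := rfl
  have hAt : (A.map star)ᴴ = Aᵀ := conjTranspose_conjTranspose Aᵀ
  have hBt : (B.map star)ᴴ = Bᵀ := conjTranspose_conjTranspose Bᵀ
  have hA : IsUnit A := isUnit_of_conjTranspose_mul_self_sub_eq_one (B := B.map star) (hBt ▸ hAA)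
  have hD : IsUnit (A.map star) := (isUnit_transpose _).mp ((isUnit_conjTranspose A).mpr hA)
  have hAC : Aᵀ * -(B.map star) = -((-(B.map star))ᵀ * A) := by
    have hBA : Bᴴ * A = -(Aᵀ * B.map star) := by
      simpa only [conjTranspose_mul, conjTranspose_neg, conjTranspose_conjTranspose,
        transpose_conjTranspose, hAt] using congrArg conjTranspose hAB
    rw [Matrix.mul_neg, transpose_neg, Matrix.neg_mul, neg_neg]
    exact hBA.symm
  have hAD : (A.map star)ᵀ * A + Bᵀ * -(B.map star) = 1 := by
    rw [hDt, Matrix.mul_neg, ← sub_eq_add_neg, hAA]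
  have hBD : (A.map star)ᵀ * B = -(Bᵀ * A.map star) := hAB
  refine ⟨hA, transpose_mul_inv_eq_neg hD hBD, ?_, ?_, ?_⟩
  · rw [← neg_inj, ← transpose_neg, ← Matrix.mul_neg]
    exact transpose_inv_mul_eq_neg hD hAC hAD hBD
  · rw [← hDt, ← sub_mul_inv_mul_eq_inv_transpose hD hAD hBD, Matrix.mul_neg, sub_neg_eq_add,
      add_sub_cancel_right]
  · rw [← hDt, ← Matrix.mul_neg]
    exact fromBlocks_eq_mul_inv_transpose_mul hD hAD hBD

end StarOrderedField

/-- Block UDL decomposition of an element `g = fromBlocks A B (-conj B) (conj A)` of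
`SO*(2n)`: `A` is invertible, `B (conj A)⁻¹` and `(conj A)⁻¹ (conj B)` are anti-symmetric,
`(A*)⁻¹ - B (conj A)⁻¹ (conj B) = A`, and `g` factors as an upper-triangular, a
block-diagonal and a lower-triangular block matrix. -/
theorem so_star_UDL
    {n : ℕ} (A B : Matrix (Fin n) (Fin n) ℂ)
    (h1 : A * Aᴴ - B * Bᴴ = 1)
    (h2 : Aᴴ * A - Bᵀ * mconj B = 1)
    (h3 : Aᴴ * B = -(Bᵀ * mconj A))
    (h4 : B * Aᵀ = -(A * Bᵀ)) :
    IsUnit A ∧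
    (B * (mconj A)⁻¹)ᵀ = -(B * (mconj A)⁻¹) ∧
    ((mconj A)⁻¹ * mconj B)ᵀ = -((mconj A)⁻¹ * mconj B) ∧
    (Aᴴ)⁻¹ - B * (mconj A)⁻¹ * mconj B = A ∧
    fromBlocks A B (-(mconj B)) (mconj A) =
      fromBlocks 1 (B * (mconj A)⁻¹) 0 1 *
      fromBlocks (Aᴴ)⁻¹ 0 0 (mconj A) *
      fromBlocks 1 0 (-((mconj A)⁻¹ * mconj B)) 1 := by
  open scoped ComplexOrder in exact so_star_UDL_general h2 h3
end

section
/- Let A ∈ Mₙ(ℂ) be symmetric (Aᵀ = A) with positive-definite real part (the real symmetric matrix (A + conj A)/2 is positive definite); then A is invertible and S := ∫_{ℝⁿ} exp(−½ xᵀAx) dⁿx converges. For any k ∈ ℕ and indices a₁,…,a_k ∈ {1,…,n}, ∫_{ℝⁿ} x_{a₁}⋯x_{a_k} · exp(−½ xᵀAx) dⁿx = S · (∂/∂J_{a₁} ⋯ ∂/∂J_{a_k}) exp(½ JᵀA⁻¹J) evaluated at J = 0, where the iterated partial derivatives are of the function J ↦ exp(½ JᵀA⁻¹J) on ℝⁿ.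 In particular the left-hand side vanishes whenever k is odd. -/
open MeasureTheory Matrix

/-- The quadratic form `xᵀ M x = ∑_{i,j} M i j * x i * x j`. -/
noncomputable def quadC {n : ℕ} (M : Matrix (Fin n) (Fin n) ℂ) (x : Fin n → ℂ) : ℂ :=
  ∑ i, ∑ j, M i j * x i * x j

/-!
The Laplace integral `G(J) = ∫ exp (⟨x, J⟩ - ½ xᵀAx) dx` has the moments of the Gaussian as its
derivatives at `J = 0`. Integrating `∂ᵥ exp (⟨x, J⟩ - ½ xᵀAx)` over `ℝⁿ` gives zero, so that
`A` times the vector of first moments is `G(J) J`. Inverting `A`, the directional derivative of `G`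
along `v` is `(vᵀA⁻¹J) G(J)`. Since `exp (½ JᵀA⁻¹J)` satisfies the same first-order equation, the
quotient of the two functions is constant, and its value at `J = 0` is `S`.
-/

section ExpIntegrable

variable {E F : Type*} [NormedAddCommGroup E] [MeasurableSpace E] [NormedAddCommGroup F]
  [NormedSpace ℝ F] {μ : Measure E} {g : E → F}

/-- Integrability against every exponential weight `exp (K ‖x‖)`. It survives multiplication by
polynomials, which is what makes Laplace integrals infinitely differentiable. -/
def ExpIntegrable (μ : Measure E) (g : E → F) : Prop :=
  ∀ K : ℝ, Integrable (fun x => Real.exp (K * ‖x‖) • g x) μ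

theorem ExpIntegrable.integrable (hg : ExpIntegrable μ g) : Integrable g μ := by
  simpa using hg 0

variable [BorelSpace E] [SecondCountableTopology E]

theorem integrable_exp_neg_norm [μ.HasTemperateGrowth] :
    Integrable (fun x => Real.exp (-‖x‖)) μ := by
  have hbound : ∀ x : E, ‖x‖ ^ (0 + μ.integrablePower) * ‖Real.exp (-‖x‖)‖ ≤
      (0 + μ.integrablePower).factorial := fun x => by
    have h := Real.pow_div_factorial_le_exp ‖x‖ (norm_nonneg x) (0 + μ.integrablePower)
    rw [div_le_iff₀ (by positivity), mul_comm] at h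
    rwa [Real.norm_eq_abs, Real.abs_exp, Real.exp_neg, ← div_eq_mul_inv,
      div_le_iff₀ (Real.exp_pos _)]
  simpa using integrable_of_le_of_pow_mul_le (k := 0) (C₁ := 1) (by simp) hbound
    (by fun_prop)

theorem ExpIntegrable.of_norm_le_exp_neg_mul_sq [μ.HasTemperateGrowth]
    (hg : AEStronglyMeasurable g μ) {c : ℝ} (hc : 0 < c)
    (hle : ∀ x, ‖g x‖ ≤ Real.exp (-c * ‖x‖ ^ 2)) : ExpIntegrable μ g := fun K => by
  refine (integrable_exp_neg_norm.const_mul (Real.exp ((K + 1) ^ 2 / (4 * c)))).mono'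
    (AEStronglyMeasurable.smul (by fun_prop) hg) (.of_forall fun x => ?_)
  have hsq : (K + 1) ^ 2 / (4 * c) + -‖x‖ - (K * ‖x‖ + -c * ‖x‖ ^ 2)
      = (K + 1 - 2 * c * ‖x‖) ^ 2 / (4 * c) := by
    field_simp
    ring
  have hnonneg : 0 ≤ (K + 1 - 2 * c * ‖x‖) ^ 2 / (4 * c) := by positivity
  calc ‖Real.exp (K * ‖x‖) • g x‖
      ≤ Real.exp (K * ‖x‖) * Real.exp (-c * ‖x‖ ^ 2) := by
        rw [norm_smul, Real.norm_eq_abs, Real.abs_exp]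
        gcongr
        exact hle x
    _ ≤ Real.exp ((K + 1) ^ 2 / (4 * c)) * Real.exp (-‖x‖) := by
        rw [← Real.exp_add, ← Real.exp_add, Real.exp_le_exp]
        linarith

theorem ExpIntegrable.bilin [NormedSpace ℝ E] {G : Type*} [NormedAddCommGroup G]
    [NormedSpace ℝ G] (hg : ExpIntegrable μ g) (T : E →L[ℝ] F →L[ℝ] G) :
    ExpIntegrable μ (fun x => T x (g x)) := fun K => by
  refine ((hg (K + 1)).norm.const_mul ‖T‖).mono' (AEStronglyMeasurable.smul (by fun_prop)
    (T.aestronglyMeasurable_comp₂ aestronglyMeasurable_id hg.integrable.aestronglyMeasurable))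
    (.of_forall fun x => ?_)
  have hexp : Real.exp (K * ‖x‖) * ‖x‖ ≤ Real.exp ((K + 1) * ‖x‖) := by
    rw [add_mul, one_mul, Real.exp_add]
    gcongr
    linarith [Real.add_one_le_exp ‖x‖]
  simp only [norm_smul, Real.norm_eq_abs, Real.abs_exp]
  calc Real.exp (K * ‖x‖) * ‖T x (g x)‖
      ≤ Real.exp (K * ‖x‖) * (‖T‖ * ‖x‖ * ‖g x‖) := by
        gcongr
        exact T.le_opNorm₂ x (g x)
    _ = ‖T‖ * ((Real.exp (K * ‖x‖) * ‖x‖) * ‖g x‖) := by ring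
    _ ≤ ‖T‖ * (Real.exp ((K + 1) * ‖x‖) * ‖g x‖) := by gcongr

end ExpIntegrable

section LaplaceIntegral

variable {E V F : Type*} [NormedAddCommGroup E] [NormedSpace ℝ E] [NormedAddCommGroup V]
  [NormedSpace ℝ V] [NormedAddCommGroup F] [NormedSpace ℝ F]

theorem pairing_le_of_norm_le (L : E →L[ℝ] V →L[ℝ] ℝ) (x : E) {J : V} {r : ℝ} (hJ : ‖J‖ ≤ r) :
    L x J ≤ ‖L‖ * r * ‖x‖ :=
  calc L x J ≤ ‖L x J‖ := le_abs_self _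
    _ ≤ ‖L‖ * ‖x‖ * r := L.le_of_opNorm₂_le_of_le le_rfl le_rfl hJ
    _ = ‖L‖ * r * ‖x‖ := mul_right_comm _ _ _

variable [MeasurableSpace E] {μ : Measure E} {g : E → F}

/-- The Laplace integral `J ↦ ∫ exp ⟨x, J⟩ g(x) dμ(x)` of a vector-valued function, for a pairing
`L` of the integration space `E` with the space `V` of sources. The sign of the exponent is that
of a generating function of moments. -/
noncomputable def laplaceIntegral (L : E →L[ℝ] V →L[ℝ] ℝ) (μ : Measure E) (g : E → F) (J : V) : F :=
  ∫ x, Real.exp (L x J) • g x ∂μ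

theorem laplaceIntegral_zero (L : E →L[ℝ] V →L[ℝ] ℝ) : laplaceIntegral L μ g 0 = ∫ x, g x ∂μ := by
  simp [laplaceIntegral]

variable [BorelSpace E]

theorem ExpIntegrable.integrable_exp_smul (hg : ExpIntegrable μ g) (L : E →L[ℝ] V →L[ℝ] ℝ) (J : V) :
    Integrable (fun x => Real.exp (L x J) • g x) μ := by
  refine (hg (‖L‖ * ‖J‖)).mono (AEStronglyMeasurable.smul
    (by fun_prop) hg.integrable.aestronglyMeasurable) (.of_forall fun x => ?_)
  simp only [norm_smul, Real.norm_eq_abs, Real.abs_exp]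
  gcongr
  exact pairing_le_of_norm_le L x le_rfl

variable [SecondCountableTopology E]

theorem ExpIntegrable.smulRight (hg : ExpIntegrable μ g) (L : E →L[ℝ] V →L[ℝ] ℝ) :
    ExpIntegrable μ (fun x => (L x).smulRight (g x)) :=
  hg.bilin ((ContinuousLinearMap.smulRightL ℝ V F).comp L)

theorem hasFDerivAt_laplaceIntegral (hg : ExpIntegrable μ g) (L : E →L[ℝ] V →L[ℝ] ℝ) (J : V) :
    HasFDerivAt (laplaceIntegral L μ g)
      (laplaceIntegral L μ (fun x => (L x).smulRight (g x)) J) J := by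
  refine hasFDerivAt_integral_of_dominated_of_fderiv_le
    (F' := fun J x => Real.exp (L x J) • (L x).smulRight (g x))
    (bound := fun x => ‖Real.exp (‖L‖ * (‖J‖ + 1) * ‖x‖) • (L x).smulRight (g x)‖)
    (Metric.closedBall_mem_nhds J one_pos)
    (.of_forall fun J' => (hg.integrable_exp_smul L J').aestronglyMeasurable)
    (hg.integrable_exp_smul L J)
    ((hg.smulRight L).integrable_exp_smul L J).aestronglyMeasurable
    (.of_forall fun x J' hJ' => ?_) (hg.smulRight L _).norm (.of_forall fun x J' _ => ?_)
  · have hnorm : ‖J'‖ ≤ ‖J‖ + 1 := by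
      linarith [norm_le_norm_add_norm_sub' J' J, mem_closedBall_iff_norm.mp hJ']
    simp only [norm_smul, Real.norm_eq_abs, Real.abs_exp]
    gcongr
    exact pairing_le_of_norm_le L x hnorm
  · refine ((L x).hasFDerivAt.exp.smul_const (g x)).congr_fderiv ?_
    ext v
    simp [mul_smul]

theorem differentiable_laplaceIntegral (hg : ExpIntegrable μ g) (L : E →L[ℝ] V →L[ℝ] ℝ) :
    Differentiable ℝ (laplaceIntegral L μ g) := fun J =>
  (hasFDerivAt_laplaceIntegral hg L J).differentiableAt

theorem fderiv_laplaceIntegral_apply [CompleteSpace F] (hg : ExpIntegrable μ g)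
    (L : E →L[ℝ] V →L[ℝ] ℝ) (J v : V) :
    fderiv ℝ (laplaceIntegral L μ g) J v = laplaceIntegral L μ (fun x => L x v • g x) J := by
  rw [(hasFDerivAt_laplaceIntegral hg L J).fderiv]
  refine (ContinuousLinearMap.integral_apply ((hg.smulRight L).integrable_exp_smul L J) v).trans ?_
  rfl

theorem ExpIntegrable.pairing_smul (hg : ExpIntegrable μ g) (L : E →L[ℝ] V →L[ℝ] ℝ) (v : V) :
    ExpIntegrable μ (fun x => L x v • g x) :=
  hg.bilin ((ContinuousLinearMap.lsmul ℝ ℝ).comp (L.flip v))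

variable [CompleteSpace F] [FiniteDimensional ℝ V]

theorem contDiff_laplaceIntegral (hg : ExpIntegrable μ g) (L : E →L[ℝ] V →L[ℝ] ℝ) (k : ℕ) :
    ContDiff ℝ k (laplaceIntegral L μ g) := by
  induction k generalizing g with
  | zero => exact contDiff_zero.mpr (differentiable_laplaceIntegral hg L).continuous
  | succ k ih =>
    refine contDiff_succ_iff_fderiv_apply.mpr
      ⟨differentiable_laplaceIntegral hg L, fun hω => absurd hω (WithTop.natCast_ne_top k),
        fun v => ?_⟩
    simpa only [fderiv_laplaceIntegral_apply hg] using ih (hg.pairing_smul L v)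

theorem iteratedFDeriv_laplaceIntegral (hg : ExpIntegrable μ g) (L : E →L[ℝ] V →L[ℝ] ℝ) {k : ℕ}
    (J : V) (v : Fin k → V) :
    iteratedFDeriv ℝ k (laplaceIntegral L μ g) J v
      = laplaceIntegral L μ (fun x => (∏ i, L x (v i)) • g x) J := by
  induction k generalizing g with
  | zero => simp
  | succ k ih =>
    have hfderiv : ContDiff ℝ k (fderiv ℝ (laplaceIntegral L μ g)) :=
      (contDiff_laplaceIntegral hg L (k + 1)).fderiv_right le_rfl
    rw [iteratedFDeriv_succ_apply_right,
      ← iteratedFDeriv_clm_apply_const_apply hfderiv le_rfl]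
    simp only [fderiv_laplaceIntegral_apply hg]
    rw [ih (hg.pairing_smul L _)]
    simp only [Fin.prod_univ_castSucc, Fin.init, mul_smul]

end LaplaceIntegral

section ComplexQuadraticForm

variable {ι : Type*} [Fintype ι]

theorem dotProduct_mulVec_comm_of_transpose_eq {R : Type*} [CommSemiring R] {M : Matrix ι ι R}
    (hM : Mᵀ = M) (v w : ι → R) : v ⬝ᵥ M *ᵥ w = w ⬝ᵥ M *ᵥ v := by
  rw [dotProduct_mulVec, ← mulVec_transpose, hM, dotProduct_comm]

theorem add_smul_dotProduct_mulVec_self {R : Type*} [CommSemiring R] {M : Matrix ι ι R}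
    (hM : Mᵀ = M) (v w : ι → R) (t : R) :
    (v + t • w) ⬝ᵥ M *ᵥ (v + t • w)
      = v ⬝ᵥ M *ᵥ v + t * (2 * (w ⬝ᵥ M *ᵥ v)) + t ^ 2 * (w ⬝ᵥ M *ᵥ w) := by
  simp only [mulVec_add, mulVec_smul, add_dotProduct, dotProduct_add, smul_dotProduct,
    dotProduct_smul, smul_eq_mul, dotProduct_mulVec_comm_of_transpose_eq hM v w]
  ring

theorem re_dotProduct_mulVec_ofReal (A : Matrix ι ι ℂ) (x y : ι → ℝ) :
    (Complex.ofReal ∘ x ⬝ᵥ A *ᵥ (Complex.ofReal ∘ y)).re = x ⬝ᵥ A.map Complex.re *ᵥ y := by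
  simp [dotProduct, mulVec, Complex.re_sum]

theorem re_star_dotProduct_mulVec {A : Matrix ι ι ℂ} (hA : Aᵀ = A) (v : ι → ℂ) :
    (star v ⬝ᵥ A *ᵥ v).re
      = (Complex.re ∘ v) ⬝ᵥ A.map Complex.re *ᵥ (Complex.re ∘ v)
        + (Complex.im ∘ v) ⬝ᵥ A.map Complex.re *ᵥ (Complex.im ∘ v) := by
  set u := Complex.ofReal ∘ Complex.re ∘ v
  set w := Complex.ofReal ∘ Complex.im ∘ v
  have hv : v = u + Complex.I • w := by
    ext i
    simp [u, w, mul_comm Complex.I]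
  have hstar : star v = u - Complex.I • w := by
    ext i
    simp [u, w, Complex.ext_iff]
  have hexpand : star v ⬝ᵥ A *ᵥ v = u ⬝ᵥ A *ᵥ u + w ⬝ᵥ A *ᵥ w := by
    rw [hstar, hv]
    simp only [mulVec_add, mulVec_smul, sub_dotProduct, dotProduct_add, smul_dotProduct,
      dotProduct_smul, smul_eq_mul, dotProduct_mulVec_comm_of_transpose_eq hA u w]
    linear_combination -(w ⬝ᵥ A *ᵥ w) * Complex.I_sq
  rw [hexpand, Complex.add_re, re_dotProduct_mulVec_ofReal, re_dotProduct_mulVec_ofReal]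

theorem isUnit_of_posDef_map_re [DecidableEq ι] {A : Matrix ι ι ℂ} (hA : Aᵀ = A)
    (hre : (A.map Complex.re).PosDef) : IsUnit A := by
  rw [isUnit_iff_isUnit_det, isUnit_iff_ne_zero]
  intro hdet
  obtain ⟨v, hv, hAv⟩ := exists_mulVec_eq_zero_iff.mpr hdet
  have hsum := re_star_dotProduct_mulVec hA v
  rw [hAv, dotProduct_zero, Complex.zero_re] at hsum
  have hnonneg : ∀ y : ι → ℝ, 0 ≤ y ⬝ᵥ A.map Complex.re *ᵥ y := by
    simpa using hre.posSemidef.dotProduct_mulVec_nonneg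
  have hzero : ∀ y : ι → ℝ, y ⬝ᵥ A.map Complex.re *ᵥ y ≤ 0 → y = 0 := fun y hy => by
    by_contra hne
    exact hy.not_gt (by simpa using hre.dotProduct_mulVec_pos hne)
  have hvre := hzero (Complex.re ∘ v) (by linarith [hnonneg (Complex.im ∘ v)])
  have hvim := hzero (Complex.im ∘ v) (by linarith [hnonneg (Complex.re ∘ v)])
  exact hv (funext fun i => Complex.ext (congrFun hvre i) (congrFun hvim i))

theorem exists_pos_mul_sq_norm_le_of_posDef {R : Matrix ι ι ℝ} (hR : R.PosDef) :
    ∃ c > 0, ∀ x : ι → ℝ, c * ‖x‖ ^ 2 ≤ x ⬝ᵥ R *ᵥ x := by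
  have hcont : Continuous fun x : ι → ℝ => x ⬝ᵥ R *ᵥ x := by fun_prop
  obtain ⟨c, hc, hle⟩ := (isCompact_sphere (0 : ι → ℝ) 1).exists_forall_le' hcont.continuousOn
    (a := 0) fun x hx => by
      simpa using hR.dotProduct_mulVec_pos (ne_zero_of_mem_unit_sphere ⟨x, hx⟩)
  refine ⟨c, hc, fun x => ?_⟩
  rcases eq_or_ne x 0 with rfl | hx
  · simp
  have h := hle (‖x‖⁻¹ • x) (by simp [norm_smul, hx])
  rw [mulVec_smul, smul_dotProduct, dotProduct_smul, smul_eq_mul, smul_eq_mul] at h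
  calc c * ‖x‖ ^ 2 ≤ ‖x‖⁻¹ * (‖x‖⁻¹ * (x ⬝ᵥ R *ᵥ x)) * ‖x‖ ^ 2 := by gcongr
    _ = x ⬝ᵥ R *ᵥ x := by field_simp

end ComplexQuadraticForm

theorem integral_eq_zero_of_hasLineDerivAt {E F : Type*} [NormedAddCommGroup E] [NormedSpace ℝ E]
    [FiniteDimensional ℝ E] [MeasurableSpace E] [BorelSpace E] {μ : Measure E} [μ.IsAddHaarMeasure]
    [NormedAddCommGroup F] [NormedSpace ℝ F] {f f' : E → F} {v : E} (hf : Integrable f μ)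
    (hf' : Integrable f' μ) (hderiv : ∀ x, HasLineDerivAt ℝ f (f' x) x v) : ∫ x, f' x ∂μ = 0 := by
  simpa using integral_bilinear_hasLineDerivAt_right_eq_neg_left_of_integrable
    (f := fun _ => (1 : ℝ)) (f' := fun _ => 0) (B := ContinuousLinearMap.lsmul ℝ ℝ)
    (by simp) (by simpa using hf') (by simpa using hf)
    (fun x _ => by simp [HasLineDerivAt, hasDerivAt_const]) (fun x _ => hderiv x)

theorem integral_eq_zero_of_odd {E F : Type*} [MeasurableSpace E] [AddGroup E] [MeasurableNeg E]
    {μ : Measure E} [μ.IsNegInvariant] [NormedAddCommGroup F] [NormedSpace ℝ F] {f : E → F}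
    (hf : Function.Odd f) : ∫ x, f x ∂μ = 0 := by
  have h := integral_neg_eq_self f μ
  simp only [hf _, integral_neg] at h
  have : IsAddTorsionFree F := .of_isTorsionFree ℝ F
  exact neg_eq_self.mp h

section DotProductIntegral

variable {ι α 𝕜 : Type*} [Fintype ι] [RCLike 𝕜] [MeasurableSpace α] {μ : Measure α} {f : α → ι → 𝕜}

theorem dotProduct_integral (hf : Integrable f μ) (w : ι → 𝕜) :
    w ⬝ᵥ ∫ x, f x ∂μ = ∫ x, w ⬝ᵥ f x ∂μ :=
  ((dotProductBilin 𝕜 𝕜 w).toContinuousLinearMap.integral_comp_comm hf).symm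

theorem integrable_const_dotProduct (hf : Integrable f μ) (w : ι → 𝕜) :
    Integrable (fun x => w ⬝ᵥ f x) μ :=
  (dotProductBilin 𝕜 𝕜 w).toContinuousLinearMap.integrable_comp hf

end DotProductIntegral

section ComplexGaussian

variable {ι : Type*} [Fintype ι]

/-- The Gaussian `exp (-½ xᵀMx)` on real vectors, for a complex matrix `M`. The generating function
`exp (½ JᵀA⁻¹J)` is the Gaussian of `-A⁻¹`. -/
noncomputable def complexGaussian (M : Matrix ι ι ℂ) (x : ι → ℝ) : ℂ :=
  Complex.exp (-(1 / 2 : ℂ) * (Complex.ofReal ∘ x ⬝ᵥ M *ᵥ (Complex.ofReal ∘ x)))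

/-- The Euclidean pairing `⟨x, J⟩ = ∑ i, x i * J i` of `ι → ℝ` with itself. -/
noncomputable def dotPairing (ι : Type*) [Fintype ι] : (ι → ℝ) →L[ℝ] (ι → ℝ) →L[ℝ] ℝ :=
  (dotProductBilin ℝ ℝ).toContinuousBilinearMap

theorem dotPairing_apply (x J : ι → ℝ) : dotPairing ι x J = x ⬝ᵥ J := rfl

theorem contDiff_complexGaussian (M : Matrix ι ι ℂ) {k : WithTop ℕ∞} :
    ContDiff ℝ k (complexGaussian M) := by
  have hcoord : ∀ i, ContDiff ℝ k fun x : ι → ℝ => (x i : ℂ) := fun i =>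
    Complex.ofRealCLM.contDiff.comp (contDiff_apply ℝ ℝ i)
  unfold complexGaussian
  simp only [dotProduct, mulVec, Function.comp_apply]
  fun_prop

theorem complexGaussian_zero (M : Matrix ι ι ℂ) : complexGaussian M 0 = 1 := by
  simp [complexGaussian]

theorem complexGaussian_neg_apply (M : Matrix ι ι ℂ) (x : ι → ℝ) :
    complexGaussian M (-x) = complexGaussian M x := by
  have hneg : Complex.ofReal ∘ (-x) = -(Complex.ofReal ∘ x) := by
    ext i
    simp
  simp [complexGaussian, hneg, mulVec_neg]

theorem complexGaussian_mul_complexGaussian_neg (M : Matrix ι ι ℂ) (x : ι → ℝ) :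
    complexGaussian M x * complexGaussian (-M) x = 1 := by
  simp [complexGaussian, ← Complex.exp_add, neg_mulVec]

theorem hasLineDerivAt_complexGaussian {M : Matrix ι ι ℂ} (hM : Mᵀ = M) (x v : ι → ℝ) :
    HasLineDerivAt ℝ (complexGaussian M)
      (-(Complex.ofReal ∘ v ⬝ᵥ M *ᵥ (Complex.ofReal ∘ x)) * complexGaussian M x) x v := by
  have hline : ∀ t : ℝ, Complex.ofReal ∘ (x + t • v)
      = Complex.ofReal ∘ x + (t : ℂ) • (Complex.ofReal ∘ v) := fun t => by
    ext i
    simp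
  have hquadratic : ∀ a b c : ℂ,
      HasDerivAt (fun t : ℝ => a + (t : ℂ) * b + (t : ℂ) ^ 2 * c) b 0 := fun a b c => by
    have hid : HasDerivAt (fun t : ℝ => (t : ℂ)) 1 0 := (hasDerivAt_id (0 : ℝ)).ofReal_comp
    simpa using! ((hid.mul_const b).const_add a).add ((hid.pow 2).mul_const c)
  simp only [HasLineDerivAt, complexGaussian, hline, add_smul_dotProduct_mulVec_self hM]
  refine ((hquadratic _ _ _).const_mul _).cexp.congr_deriv ?_
  simp only [Complex.ofReal_zero, zero_mul, add_zero, zero_pow two_ne_zero]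
  ring

theorem expIntegrable_complexGaussian {A : Matrix ι ι ℂ} (hre : (A.map Complex.re).PosDef) :
    ExpIntegrable volume (complexGaussian A) := by
  obtain ⟨c, hc, hle⟩ := exists_pos_mul_sq_norm_le_of_posDef hre
  refine .of_norm_le_exp_neg_mul_sq
    (contDiff_complexGaussian A (k := 0)).continuous.aestronglyMeasurable (half_pos hc) fun x => ?_
  have hexponent : (-(1 / 2 : ℂ) * (Complex.ofReal ∘ x ⬝ᵥ A *ᵥ (Complex.ofReal ∘ x))).re
      = -(1 / 2) * (x ⬝ᵥ A.map Complex.re *ᵥ x) := by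
    rw [← re_dotProduct_mulVec_ofReal, ← Complex.re_ofReal_mul]
    norm_num
  rw [complexGaussian, Complex.norm_exp, hexponent, Real.exp_le_exp]
  linarith [hle x]

/-- The vector `∫ x exp (⟨x, J⟩ - ½ xᵀAx) dx` of unnormalised first moments of the Gaussian of `A`
in the presence of the source `J`. Its pairing with `v` is the derivative along `v` of the Laplace
integral of the Gaussian. -/
noncomputable def gaussianFirstMoment (A : Matrix ι ι ℂ) (J : ι → ℝ) : ι → ℂ :=
  laplaceIntegral (dotPairing ι) volume (fun x => complexGaussian A x • (Complex.ofReal ∘ x)) J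

theorem expIntegrable_complexGaussian_smul_ofReal {A : Matrix ι ι ℂ}
    (hre : (A.map Complex.re).PosDef) :
    ExpIntegrable volume fun x : ι → ℝ => complexGaussian A x • (Complex.ofReal ∘ x) :=
  (expIntegrable_complexGaussian hre).bilin
    ((ContinuousLinearMap.lsmul ℝ ℂ).flip.comp
      (ContinuousLinearMap.piMap fun _ : ι => Complex.ofRealCLM))

theorem ofReal_dotProduct_gaussianFirstMoment {A : Matrix ι ι ℂ} (hre : (A.map Complex.re).PosDef)
    (J v : ι → ℝ) :
    Complex.ofReal ∘ v ⬝ᵥ gaussianFirstMoment A J = laplaceIntegral (dotPairing ι) volume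
      (fun x => dotPairing ι x v • complexGaussian A x) J := by
  rw [gaussianFirstMoment, laplaceIntegral, dotProduct_integral
    ((expIntegrable_complexGaussian_smul_ofReal hre).integrable_exp_smul (dotPairing ι) J)]
  refine integral_congr_ae (.of_forall fun x => ?_)
  have hcast : Complex.ofReal ∘ v ⬝ᵥ Complex.ofReal ∘ x = ((x ⬝ᵥ v : ℝ) : ℂ) := by
    rw [dotProduct_comm x v]
    exact (Complex.ofRealHom.map_dotProduct v x).symm
  simp only [dotPairing_apply, dotProduct_smul, hcast, Complex.real_smul, smul_eq_mul,
    mul_comm (complexGaussian A x)]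

theorem hasLineDerivAt_exp_smul_complexGaussian {A : Matrix ι ι ℂ} (hA : Aᵀ = A) (J x v : ι → ℝ) :
    HasLineDerivAt ℝ (fun x => Real.exp (dotPairing ι x J) • complexGaussian A x)
      (((v ⬝ᵥ J : ℝ) - Complex.ofReal ∘ v ⬝ᵥ A *ᵥ (Complex.ofReal ∘ x)) *
        (Real.exp (dotPairing ι x J) • complexGaussian A x)) x v := by
  have hexp : HasLineDerivAt ℝ (fun y => Real.exp (dotPairing ι y J))
      (Real.exp (dotPairing ι x J) * (v ⬝ᵥ J)) x v :=
    ((dotPairing ι).flip J).hasFDerivAt.exp.hasLineDerivAt v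
  refine (HasDerivAt.smul hexp (hasLineDerivAt_complexGaussian hA x v)).congr_deriv ?_
  simp only [zero_smul, add_zero, Complex.real_smul, Complex.ofReal_mul]
  ring

theorem mulVec_gaussianFirstMoment {A : Matrix ι ι ℂ} (hA : Aᵀ = A)
    (hre : (A.map Complex.re).PosDef) (J : ι → ℝ) :
    A *ᵥ gaussianFirstMoment A J
      = laplaceIntegral (dotPairing ι) volume (complexGaussian A) J • (Complex.ofReal ∘ J) := by
  classical
  ext i
  have hint := (expIntegrable_complexGaussian hre).integrable_exp_smul (dotPairing ι) J
  have hmoment :=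
    (expIntegrable_complexGaussian_smul_ofReal hre).integrable_exp_smul (dotPairing ι) J
  have hparts := integral_eq_zero_of_hasLineDerivAt (μ := volume) (v := Pi.single i 1)
    (f' := fun x => J i * (Real.exp (dotPairing ι x J) • complexGaussian A x)
      - A i ⬝ᵥ (Real.exp (dotPairing ι x J) • complexGaussian A x • (Complex.ofReal ∘ x)))
    hint ((hint.const_mul _).sub (integrable_const_dotProduct hmoment (A i))) fun x => by
      have hsingle : Complex.ofReal ∘ (Pi.single i 1 : ι → ℝ) = Pi.single i 1 := by
        ext j
        simp [Pi.single_apply, apply_ite Complex.ofReal]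
      refine (hasLineDerivAt_exp_smul_complexGaussian hA J x (Pi.single i 1)).congr_deriv ?_
      simp only [hsingle, single_one_dotProduct, mulVec, dotProduct_smul, Complex.real_smul,
        smul_eq_mul]
      ring
  rw [integral_sub (hint.const_mul _) (integrable_const_dotProduct hmoment (A i)),
    integral_const_mul, ← dotProduct_integral hmoment, sub_eq_zero] at hparts
  rw [Pi.smul_apply, smul_eq_mul, mul_comm]
  exact hparts.symm

theorem hasLineDerivAt_laplaceIntegral_complexGaussian [DecidableEq ι] {A : Matrix ι ι ℂ}
    (hA : Aᵀ = A) (hre : (A.map Complex.re).PosDef) (J v : ι → ℝ) :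
    HasLineDerivAt ℝ (laplaceIntegral (dotPairing ι) volume (complexGaussian A))
      ((Complex.ofReal ∘ v ⬝ᵥ A⁻¹ *ᵥ (Complex.ofReal ∘ J)) *
        laplaceIntegral (dotPairing ι) volume (complexGaussian A) J) J v := by
  have hg := expIntegrable_complexGaussian hre
  have hdet : IsUnit A.det := (isUnit_iff_isUnit_det A).mp (isUnit_of_posDef_map_re hA hre)
  have hmoment : gaussianFirstMoment A J = laplaceIntegral (dotPairing ι) volume
      (complexGaussian A) J • A⁻¹ *ᵥ (Complex.ofReal ∘ J) := by
    rw [← mulVec_smul, ← mulVec_gaussianFirstMoment hA hre, mulVec_mulVec, nonsing_inv_mul _ hdet,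
      one_mulVec]
  have hderiv := (differentiable_laplaceIntegral hg (dotPairing ι) J).hasFDerivAt.hasLineDerivAt v
  rw [fderiv_laplaceIntegral_apply hg] at hderiv
  rwa [← ofReal_dotProduct_gaussianFirstMoment hre, hmoment, dotProduct_smul, smul_eq_mul,
    mul_comm] at hderiv

theorem laplaceIntegral_complexGaussian [DecidableEq ι] {A : Matrix ι ι ℂ} (hA : Aᵀ = A)
    (hre : (A.map Complex.re).PosDef) :
    laplaceIntegral (dotPairing ι) volume (complexGaussian A)
      = (∫ x, complexGaussian A x) • complexGaussian (-A⁻¹) := by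
  have hinv : A⁻¹ᵀ = A⁻¹ := by rw [transpose_nonsing_inv, hA]
  set G := laplaceIntegral (dotPairing ι) volume (complexGaussian A) with hG
  have hdiff : Differentiable ℝ (G * complexGaussian A⁻¹) := fun J =>
    (differentiable_laplaceIntegral (expIntegrable_complexGaussian hre) _ J).mul
      ((contDiff_complexGaussian A⁻¹ (k := 1)).differentiable one_ne_zero J)
  have hfderiv : ∀ J, fderiv ℝ (G * complexGaussian A⁻¹) J = 0 := fun J => by
    ext v
    rw [← (hdiff J).lineDeriv_eq_fderiv]
    refine HasLineDerivAt.lineDeriv ((HasDerivAt.mul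
      (hasLineDerivAt_laplaceIntegral_complexGaussian hA hre J v)
      (hasLineDerivAt_complexGaussian hinv J v)).congr_deriv ?_)
    simp only [zero_smul, add_zero, _root_.zero_apply]
    ring
  ext J
  have hconst := is_const_of_fderiv_eq_zero hdiff hfderiv J 0
  calc G J = (G * complexGaussian A⁻¹) J * complexGaussian (-A⁻¹) J := by
        rw [Pi.mul_apply, mul_assoc, complexGaussian_mul_complexGaussian_neg, mul_one]
    _ = (∫ x, complexGaussian A x) * complexGaussian (-A⁻¹) J := by
        rw [hconst, Pi.mul_apply, complexGaussian_zero, mul_one, hG, laplaceIntegral_zero]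

theorem laplaceIntegral_prod_smul_complexGaussian [DecidableEq ι] {A : Matrix ι ι ℂ} (hA : Aᵀ = A)
    (hre : (A.map Complex.re).PosDef) {k : ℕ} (v : Fin k → ι → ℝ) (J : ι → ℝ) :
    laplaceIntegral (dotPairing ι) volume (fun x => (∏ i, x ⬝ᵥ v i) • complexGaussian A x) J
      = (∫ x, complexGaussian A x) * iteratedFDeriv ℝ k (complexGaussian (-A⁻¹)) J v := by
  have h := iteratedFDeriv_laplaceIntegral (expIntegrable_complexGaussian hre) (dotPairing ι) J v
  rw [laplaceIntegral_complexGaussian hA hre,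
    iteratedFDeriv_const_smul_apply (contDiff_complexGaussian _).contDiffAt] at h
  exact h.symm

theorem gaussian_moments_general [DecidableEq ι] (A : Matrix ι ι ℂ) (hA : Aᵀ = A)
    (hre : (A.map Complex.re).PosDef) :
    IsUnit A ∧ Integrable (complexGaussian A) ∧ ∀ (k : ℕ) (v : Fin k → ι → ℝ),
      (∫ x, (∏ i, x ⬝ᵥ v i) • complexGaussian A x)
        = (∫ x, complexGaussian A x) * iteratedFDeriv ℝ k (complexGaussian (-A⁻¹)) 0 v ∧
      (Odd k → ∫ x, (∏ i, x ⬝ᵥ v i) • complexGaussian A x = 0) := by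
  refine ⟨isUnit_of_posDef_map_re hA hre, (expIntegrable_complexGaussian hre).integrable,
    fun k v => ⟨?_, fun hk => integral_eq_zero_of_odd fun x => ?_⟩⟩
  · rw [← laplaceIntegral_prod_smul_complexGaussian hA hre, laplaceIntegral_zero]
  · simp [complexGaussian_neg_apply, Finset.prod_neg, hk.neg_one_pow]

end ComplexGaussian

theorem quadC_eq_dotProduct {n : ℕ} (M : Matrix (Fin n) (Fin n) ℂ) (x : Fin n → ℂ) :
    quadC M x = x ⬝ᵥ M *ᵥ x := by
  simp only [quadC, dotProduct, mulVec, Finset.mul_sum]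
  exact Finset.sum_congr rfl fun i _ => Finset.sum_congr rfl fun j _ => by ring

theorem exp_neg_half_mul_quadC {n : ℕ} (M : Matrix (Fin n) (Fin n) ℂ) (x : Fin n → ℝ) :
    Complex.exp (-(1 / 2 : ℂ) * quadC M fun i => (x i : ℂ)) = complexGaussian M x := by
  rw [quadC_eq_dotProduct]
  rfl

theorem exp_half_mul_quadC {n : ℕ} (M : Matrix (Fin n) (Fin n) ℂ) (x : Fin n → ℝ) :
    Complex.exp ((1 / 2 : ℂ) * quadC M fun i => (x i : ℂ)) = complexGaussian (-M) x := by
  rw [quadC_eq_dotProduct, complexGaussian, neg_mulVec, dotProduct_neg, neg_mul_neg]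
  rfl

/-- Moments of a (complex) Gaussian: for a symmetric `A ∈ Mₙ(ℂ)` with positive-definite
real part, `A` is invertible, `x ↦ exp(-½ xᵀAx)` is integrable on `ℝⁿ`, and
`∫ x_{a₁}⋯x_{a_k} exp(-½ xᵀAx) = S · ∂_{J_{a₁}}⋯∂_{J_{a_k}} exp(½ JᵀA⁻¹J)|_{J=0}`,
where `S` is the Gaussian integral; in particular the moment vanishes for odd `k`. -/
theorem gaussian_moments
    {n : ℕ} (A : Matrix (Fin n) (Fin n) ℂ)
    (hsym : Aᵀ = A)
    (hpos : (Matrix.of fun i j => (A i j).re : Matrix (Fin n) (Fin n) ℝ).PosDef) :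
    IsUnit A ∧
    Integrable (fun x : Fin n → ℝ =>
      Complex.exp (-(1 / 2 : ℂ) * quadC A fun i => (x i : ℂ))) ∧
    ∀ (k : ℕ) (a : Fin k → Fin n),
      (∫ x : Fin n → ℝ, (∏ i, (x (a i) : ℂ)) *
          Complex.exp (-(1 / 2 : ℂ) * quadC A fun i => (x i : ℂ))) =
        (∫ x : Fin n → ℝ, Complex.exp (-(1 / 2 : ℂ) * quadC A fun i => (x i : ℂ))) *
          iteratedFDeriv ℝ k
            (fun J : Fin n → ℝ => Complex.exp ((1 / 2 : ℂ) * quadC A⁻¹ fun i => (J i : ℂ)))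
            0 (fun i => Pi.single (a i) 1) ∧
      (Odd k →
        (∫ x : Fin n → ℝ, (∏ i, (x (a i) : ℂ)) *
            Complex.exp (-(1 / 2 : ℂ) * quadC A fun i => (x i : ℂ))) = 0) := by
  obtain ⟨hunit, hint, hmoments⟩ := gaussian_moments_general A hsym hpos
  simp only [exp_neg_half_mul_quadC, exp_half_mul_quadC]
  exact ⟨hunit, hint, fun k a => by simpa using hmoments k fun i => Pi.single (a i) 1⟩
end

section
/- Let n ≥ 2, R = ℂ[x₁,…,xₙ,y₁,…,yₙ], and let ζ ∈ Mₙ(ℂ) be anti-symmetric (ζᵀ = −ζ) of rank 2. Define the ℂ-linear endomorphisms of R: F̃_ζ := multiplication by Σ_{a,b} ζ_{ab}·(y_a x_b − x_a y_b), and F_ζ := Σ_{a,b} conj(ζ_{ab})·(∂²/∂y_a∂x_b − ∂²/∂x_a∂y_b). Then for every integer J ≥ 1, (½F_ζ)·(½F̃_ζ)^J (1) = J(J+1)·(½ tr(ζ*ζ))·(½F̃_ζ)^{J−1} (1), and consequently (½F_ζ)^J·(½F̃_ζ)^J (1) = J!·(J+1)!·(½ tr(ζ*ζ))^J as constant polynomials,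 where 1 ∈ R is the constant polynomial. -/
open MvPolynomial Matrix

/-- The polynomial `∑_{a,b} ζ_{ab} (y_a x_b - x_a y_b)`, multiplication by which realizes
the raising operator `F̃_ζ = ∑ ζ^{ab}(B_a†A_b† - A_a†B_b†)`. -/
noncomputable def fzeta (n : ℕ) (ζ : Matrix (Fin n) (Fin n) ℂ) :
    MvPolynomial (Fin n ⊕ Fin n) ℂ :=
  ∑ a, ∑ b, ζ a b • (X (Sum.inr a) * X (Sum.inl b) - X (Sum.inl a) * X (Sum.inr b))

/-- The lowering operator
`F_ζ = ∑_{a,b} conj(ζ_{ab}) (∂²/∂y_a∂x_b - ∂²/∂x_a∂y_b)` on `ℂ[x₁,…,xₙ,y₁,…,yₙ]`. -/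
noncomputable def Fzeta (n : ℕ) (ζ : Matrix (Fin n) (Fin n) ℂ)
    (p : MvPolynomial (Fin n ⊕ Fin n) ℂ) : MvPolynomial (Fin n ⊕ Fin n) ℂ :=
  ∑ a, ∑ b, (starRingEnd ℂ) (ζ a b) •
    (pderiv (Sum.inr a) (pderiv (Sum.inl b) p) - pderiv (Sum.inl a) (pderiv (Sum.inr b) p))

/-!
Write `Ω_{ab} = ∂²/∂y_a∂x_b - ∂²/∂x_a∂y_b` and `f = ∑ A_{ab} y_a x_b` for an antisymmetric
matrix `A`. Rank less than four makes every `4 × 4` sub-Pfaffian of `A` vanish, and these Plücker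
relations amount to `∂f/∂y_a ∂f/∂x_b - ∂f/∂x_a ∂f/∂y_b = A_{ab} f`. Hence already a single `Ω_{ab}`
maps `f ^ J` to the multiple `J (J + 1) A_{ab} f ^ (J - 1)`; contracting with a second matrix turns
the factor `A_{ab}` into a trace, and iterating gives the product of the factors.
-/

theorem iterate_apply_eq_prod_smul {R M : Type*} [CommSemiring R] [AddCommMonoid M] [Module R M]
    (L : M →ₗ[R] M) (v : ℕ → M) (c : ℕ → R) (hL : ∀ j, L (v (j + 1)) = c j • v j) (J : ℕ) :
    L^[J] (v J) = (∏ j ∈ Finset.range J, c j) • v 0 := by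
  induction J with
  | zero => simp
  | succ J ih =>
    rw [Function.iterate_succ_apply, hL, ← Module.End.pow_apply, map_smul, Module.End.pow_apply,
      ih, smul_smul, Finset.prod_range_succ_comm]

theorem prod_range_mul_succ_mul {R : Type*} [CommSemiring R] (c : R) (J : ℕ) :
    ∏ j ∈ Finset.range J, ((j + 1 : ℕ) * ((j + 1 : ℕ) + 1) * c) =
      J.factorial * (J + 1).factorial * c ^ J := by
  induction J with
  | zero => simp
  | succ J ih =>
    rw [Finset.prod_range_succ, ih, Nat.factorial_succ (J + 1), Nat.factorial_succ J]
    push_cast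
    ring

section Plucker

variable {ι : Type*}

/-- The three-term Plücker relations for an antisymmetric matrix: all its `4 × 4` sub-Pfaffians
vanish. -/
def PluckerRelations {R : Type*} [CommRing R] (A : Matrix ι ι R) : Prop :=
  ∀ a b c d, A a b * A c d - A a c * A b d + A a d * A b c = 0

theorem det_fin_four_of_alternating {R : Type*} [CommRing R] (A : Matrix (Fin 4) (Fin 4) R)
    (hanti : Aᵀ = -A) (hdiag : ∀ i, A i i = 0) :
    A.det = (A 0 1 * A 2 3 - A 0 2 * A 1 3 + A 0 3 * A 1 2) ^ 2 := by
  have hneg (i j) : A j i = -A i j := congrFun (congrFun hanti i) j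
  rw [det_succ_row_zero, Fin.sum_univ_four]
  simp only [det_fin_three, submatrix_apply, Fin.succAbove, Fin.isValue, Fin.reduceCastSucc,
    Fin.reduceSucc, Fin.reduceLT, ↓reduceIte, Fin.coe_ofNat_eq_mod, hdiag,
    hneg 0 1, hneg 0 2, hneg 0 3, hneg 1 2, hneg 1 3, hneg 2 3]
  ring

theorem det_submatrix_eq_zero_of_rank_lt {κ m R : Type*} [Fintype ι] [Fintype m]
    [DecidableEq m] [CommRing R] [IsDomain R] (A : Matrix κ ι R) (r : m → κ) (c : m → ι)
    (hrank : A.rank < Fintype.card m) :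
    (A.submatrix r c).det = 0 := by
  by_contra hdet
  exact hrank.not_ge ((rank_of_det_ne_zero hdet).symm.trans_le (A.rank_submatrix_le r c))

theorem pluckerRelations_of_rank_lt_four {R : Type*} [Fintype ι] [CommRing R] [IsDomain R]
    {A : Matrix ι ι R} (hanti : Aᵀ = -A) (hdiag : ∀ i, A i i = 0) (hrank : A.rank < 4) :
    PluckerRelations A := by
  intro a b c d
  have hanti' : (A.submatrix ![a, b, c, d] ![a, b, c, d])ᵀ =
      -A.submatrix ![a, b, c, d] ![a, b, c, d] := by
    rw [transpose_submatrix, hanti, submatrix_neg, Pi.neg_apply, Pi.neg_apply]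
  have hdet := det_submatrix_eq_zero_of_rank_lt A ![a, b, c, d] ![a, b, c, d] (by simpa using hrank)
  rw [det_fin_four_of_alternating _ hanti' fun i => hdiag _] at hdet
  exact eq_zero_of_pow_eq_zero hdet

end Plucker

section Omega

variable {ι R : Type*} [CommRing R]

/-- Cayley's omega operator `∂²/∂y_a∂x_b - ∂²/∂x_a∂y_b` on polynomials in the variables
`x_i = X (Sum.inl i)` and `y_i = X (Sum.inr i)`. -/
noncomputable def cayleyOmega (a b : ι) :
    MvPolynomial (ι ⊕ ι) R →ₗ[R] MvPolynomial (ι ⊕ ι) R :=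
  (pderiv (Sum.inr a)).toLinearMap ∘ₗ (pderiv (Sum.inl b)).toLinearMap -
    (pderiv (Sum.inl a)).toLinearMap ∘ₗ (pderiv (Sum.inr b)).toLinearMap

theorem cayleyOmega_apply (a b : ι) (p : MvPolynomial (ι ⊕ ι) R) :
    cayleyOmega a b p =
      pderiv (Sum.inr a) (pderiv (Sum.inl b) p) - pderiv (Sum.inl a) (pderiv (Sum.inr b) p) :=
  rfl

theorem cayleyOmega_pow (a b : ι) (p : MvPolynomial (ι ⊕ ι) R) (J : ℕ) :
    cayleyOmega a b (p ^ J) =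
      (J * (J - 1 : ℕ) : R) • (p ^ (J - 2) *
        (pderiv (Sum.inr a) p * pderiv (Sum.inl b) p -
          pderiv (Sum.inl a) p * pderiv (Sum.inr b) p)) +
      (J : R) • (p ^ (J - 1) * cayleyOmega a b p) := by
  simp only [cayleyOmega_apply, pderiv_pow, pderiv_mul, Derivation.map_natCast, Nat.sub_sub,
    smul_eq_C_mul, C_mul, map_natCast]
  ring

variable [Fintype ι]

/-- The operator `∑_{a,b} B_{ba} Ω_{ab}`, which is `F_ζ` for `B = ζ*`. The transposed indices of `B`
make its action on powers of `∑_{a,b} A_{ab} y_a x_b` depend on `tr (B A)`. -/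
noncomputable def omegaContraction (B : Matrix ι ι R) :
    MvPolynomial (ι ⊕ ι) R →ₗ[R] MvPolynomial (ι ⊕ ι) R :=
  ∑ a, ∑ b, B b a • cayleyOmega a b

/-- The bilinear polynomial `∑_{a,b} A_{ab} y_a x_b`. For antisymmetric `A` this is `½F̃_A`, as
each summand of `F̃_A` contributes twice. -/
noncomputable def pairingPoly (A : Matrix ι ι R) : MvPolynomial (ι ⊕ ι) R :=
  ∑ a, ∑ b, A a b • (X (Sum.inr a) * X (Sum.inl b))

variable {A : Matrix ι ι R}

theorem sum_smul_sub_eq_two_smul_pairingPoly (hanti : Aᵀ = -A) :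
    ∑ a, ∑ b, A a b • (X (Sum.inr a) * X (Sum.inl b) - X (Sum.inl a) * X (Sum.inr b)) =
      (2 : R) • pairingPoly A := by
  have hswap : ∑ a, ∑ b, A a b • (X (Sum.inl a) * X (Sum.inr b)) = -pairingPoly A := by
    rw [Finset.sum_comm, pairingPoly]
    simp only [← Finset.sum_neg_distrib, ← neg_smul, mul_comm (X (Sum.inl _)),
      ← A.neg_apply, ← hanti, transpose_apply]
  simp only [smul_sub, Finset.sum_sub_distrib, hswap]
  rw [← pairingPoly, sub_neg_eq_add, two_smul]

theorem pderiv_inl_pairingPoly (A : Matrix ι ι R) (b : ι) :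
    pderiv (Sum.inl b) (pairingPoly A) = ∑ d, A d b • X (Sum.inr d) := by
  classical
  simp [pairingPoly, pderiv_X, Pi.single_apply]

theorem pderiv_inr_pairingPoly (A : Matrix ι ι R) (a : ι) :
    pderiv (Sum.inr a) (pairingPoly A) = ∑ c, A a c • X (Sum.inl c) := by
  classical
  simp [pairingPoly, pderiv_X, Pi.single_apply]

theorem cayleyOmega_pairingPoly (A : Matrix ι ι R) (a b : ι) :
    cayleyOmega a b (pairingPoly A) = C (A a b - A b a) := by
  classical
  simp [cayleyOmega_apply, pderiv_inl_pairingPoly, pderiv_inr_pairingPoly, pderiv_X,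
    Pi.single_apply, smul_eq_C_mul]

theorem pderiv_mul_pderiv_sub_pairingPoly (hanti : Aᵀ = -A) (hA : PluckerRelations A) (a b : ι) :
    pderiv (Sum.inr a) (pairingPoly A) * pderiv (Sum.inl b) (pairingPoly A) -
        pderiv (Sum.inl a) (pairingPoly A) * pderiv (Sum.inr b) (pairingPoly A) =
      A a b • pairingPoly A := by
  have hneg (i j) : A j i = -A i j := congrFun (congrFun hanti i) j
  have hcoeff (c d) : A d b * A a c - A d a * A b c = A a b * A d c := by
    rw [hneg b d, hneg a d, hneg c d]
    linear_combination hA a b c d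
  simp only [pderiv_inl_pairingPoly, pderiv_inr_pairingPoly]
  rw [mul_comm]
  simp only [Finset.sum_mul_sum, pairingPoly, smul_mul_smul_comm, Finset.smul_sum,
    ← Finset.sum_sub_distrib, ← sub_smul, smul_smul, hcoeff]

theorem cayleyOmega_pairingPoly_pow (hanti : Aᵀ = -A) (hA : PluckerRelations A) (a b : ι)
    (J : ℕ) :
    cayleyOmega a b (pairingPoly A ^ J) =
      (J * (J + 1) * A a b : R) • pairingPoly A ^ (J - 1) := by
  have hneg : A b a = -A a b := congrFun (congrFun hanti a) b
  rw [cayleyOmega_pow, pderiv_mul_pderiv_sub_pairingPoly hanti hA, cayleyOmega_pairingPoly, hneg]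
  rcases J with _ | _ | J
  · simp
  · simp only [smul_eq_C_mul, zero_add, Nat.sub_self, Nat.cast_zero, Nat.cast_one, mul_zero, C_0,
      C_1, C_add, C_mul, C_sub, C_neg]
    ring
  · simp only [smul_eq_C_mul, Nat.add_sub_cancel, Nat.reduceSubDiff, Nat.cast_add, Nat.cast_one,
      C_1, C_add, C_mul, C_sub, C_neg, map_natCast]
    ring

theorem omegaContraction_pairingPoly_pow (hanti : Aᵀ = -A) (hA : PluckerRelations A)
    (B : Matrix ι ι R) (J : ℕ) :
    omegaContraction B (pairingPoly A ^ J) =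
      (J * (J + 1) * (B * A).trace : R) • pairingPoly A ^ (J - 1) := by
  have htrace : (B * A).trace = ∑ a, ∑ b, B b a * A a b := by
    rw [Finset.sum_comm]
    simp only [trace, diag_apply, mul_apply]
  simp only [omegaContraction, LinearMap.sum_apply, LinearMap.smul_apply,
    cayleyOmega_pairingPoly_pow hanti hA, htrace, Finset.mul_sum, Finset.sum_smul, smul_smul,
    mul_left_comm]

end Omega

theorem coherent_intertwiner_norm_general {ι R : Type*} [Fintype ι] [CommRing R]
    {A : Matrix ι ι R} (hanti : Aᵀ = -A) (hA : PluckerRelations A) (B : Matrix ι ι R) :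
    (∀ J : ℕ, omegaContraction B (pairingPoly A ^ J) =
      (J * (J + 1) * (B * A).trace : R) • pairingPoly A ^ (J - 1)) ∧
    (∀ J : ℕ, (omegaContraction B)^[J] (pairingPoly A ^ J) =
      C (J.factorial * (J + 1).factorial * (B * A).trace ^ J)) := by
  have hlower := omegaContraction_pairingPoly_pow hanti hA B
  refine ⟨hlower, fun J => ?_⟩
  rw [iterate_apply_eq_prod_smul _ (pairingPoly A ^ ·) _ (fun j => hlower (j + 1)),
    prod_range_mul_succ_mul, pow_zero, smul_eq_C_mul, mul_one]

theorem half_smul_fzeta {n : ℕ} {ζ : Matrix (Fin n) (Fin n) ℂ} (hanti : ζᵀ = -ζ) :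
    (2⁻¹ : ℂ) • fzeta n ζ = pairingPoly ζ := by
  rw [fzeta, sum_smul_sub_eq_two_smul_pairingPoly hanti, inv_smul_smul₀ two_ne_zero]

theorem half_smul_Fzeta {n : ℕ} (ζ : Matrix (Fin n) (Fin n) ℂ) :
    (fun p => (2⁻¹ : ℂ) • Fzeta n ζ p) = omegaContraction ((2⁻¹ : ℂ) • ζᴴ) := by
  ext1 p
  simp [Fzeta, omegaContraction, cayleyOmega_apply, Finset.smul_sum, smul_smul]

/-- For an anti-symmetric `ζ` of rank 2,
`(½F_ζ)(½F̃_ζ)^J(1) = J(J+1)(½ tr(ζ*ζ)) (½F̃_ζ)^{J-1}(1)` for `J ≥ 1`, and hence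
`(½F_ζ)^J(½F̃_ζ)^J(1) = J!(J+1)!(½ tr(ζ*ζ))^J`. -/
theorem coherent_intertwiner_norm
    {n : ℕ} (hn : 2 ≤ n) (ζ : Matrix (Fin n) (Fin n) ℂ)
    (hanti : ζᵀ = -ζ) (hrank : ζ.rank = 2) :
    (∀ J : ℕ, 1 ≤ J →
      (2⁻¹ : ℂ) • Fzeta n ζ (((2⁻¹ : ℂ) • fzeta n ζ) ^ J) =
        ((J : ℂ) * ((J : ℂ) + 1) * ((ζᴴ * ζ).trace / 2)) •
          ((2⁻¹ : ℂ) • fzeta n ζ) ^ (J - 1)) ∧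
    (∀ J : ℕ,
      (fun p => (2⁻¹ : ℂ) • Fzeta n ζ p)^[J] (((2⁻¹ : ℂ) • fzeta n ζ) ^ J) =
        C ((J.factorial : ℂ) * ((J + 1).factorial : ℂ) * ((ζᴴ * ζ).trace / 2) ^ J)) := by
  have hdiag (a) : ζ a a = 0 := self_eq_neg.mp (congrFun (congrFun hanti a) a)
  have hplucker := pluckerRelations_of_rank_lt_four hanti hdiag (by omega)
  have hgeneral := coherent_intertwiner_norm_general hanti hplucker ((2⁻¹ : ℂ) • ζᴴ)
  rw [smul_mul_assoc, trace_smul, smul_eq_mul, ← div_eq_inv_mul, ← half_smul_Fzeta,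
    ← half_smul_fzeta hanti] at hgeneral
  exact ⟨fun J _ => hgeneral.1 J, hgeneral.2⟩
end

section
/- Let n ≥ 1 and R = ℂ[x₁,…,xₙ,y₁,…,yₙ]. For 1 ≤ a,b ≤ n define the ℂ-linear endomorphisms of R: E_{ab} := x_a·∂/∂x_b + y_a·∂/∂y_b + δ_{ab}·id, F_{ab} := ∂²/∂y_a∂x_b − ∂²/∂x_a∂y_b, and F̃_{ab} := multiplication by (y_a x_b − x_a y_b). Then these operators satisfy the 𝔰𝔬*(2n) commutation relations: [E_{ab},E_{cd}] = δ_{cb}E_{ad} − δ_{ad}E_{cb}; [E_{ab},F̃_{cd}] = δ_{bc}F̃_{ad} − δ_{bd}F̃_{ac}; [E_{ab},F_{cd}] = δ_{ad}F_{bc} − δ_{ac}F_{bd}; [F_{ab},F̃_{cd}] = δ_{db}E_{ca} + δ_{ca}E_{db} − δ_{cb}E_{da} − δ_{da}E_{cb}; and [F_{ab},F_{cd}] = [F̃_{ab},F̃_{cd}] = 0. -/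
open MvPolynomial

/-- `E_{ab} = x_a ∂/∂x_b + y_a ∂/∂y_b + δ_{ab}` on `ℂ[x₁,…,xₙ,y₁,…,yₙ]`. -/
noncomputable def Eop (n : ℕ) (a b : Fin n) (p : MvPolynomial (Fin n ⊕ Fin n) ℂ) :
    MvPolynomial (Fin n ⊕ Fin n) ℂ :=
  X (Sum.inl a) * pderiv (Sum.inl b) p + X (Sum.inr a) * pderiv (Sum.inr b) p +
    (if a = b then (1 : ℂ) else 0) • p

/-- `F_{ab} = ∂²/∂y_a∂x_b - ∂²/∂x_a∂y_b` on `ℂ[x₁,…,xₙ,y₁,…,yₙ]`. -/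
noncomputable def Fop (n : ℕ) (a b : Fin n) (p : MvPolynomial (Fin n ⊕ Fin n) ℂ) :
    MvPolynomial (Fin n ⊕ Fin n) ℂ :=
  pderiv (Sum.inr a) (pderiv (Sum.inl b) p) - pderiv (Sum.inl a) (pderiv (Sum.inr b) p)

/-- `F̃_{ab}` = multiplication by `y_a x_b - x_a y_b` on `ℂ[x₁,…,xₙ,y₁,…,yₙ]`. -/
noncomputable def Ftildeop (n : ℕ) (a b : Fin n) (p : MvPolynomial (Fin n ⊕ Fin n) ℂ) :
    MvPolynomial (Fin n ⊕ Fin n) ℂ :=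
  (X (Sum.inr a) * X (Sum.inl b) - X (Sum.inl a) * X (Sum.inr b)) * p

/-!
All the relations follow from the canonical commutation relations `[aᵢ, aⱼ†] = δᵢⱼ` alone, in any
ring. Bracketing with the bilinears `E` and `F` acts linearly on the modes: `E` rotates creation
operators among themselves and annihilation operators among themselves, while `F` turns creation
operators into annihilation operators. Since the commutator is a derivation, this determines the
brackets with quadratic expressions. In `[F, F̃]` the result still has to be normally ordered; the
constants this produces are exactly the shifts `δ` built into `E`.
-/

attribute [local instance] LieRing.ofAssociativeRing

section Commutator

variable {A : Type*} [Ring A]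

lemma commutator_mul_right (x y z : A) : ⁅x, y * z⁆ = ⁅x, y⁆ * z + y * ⁅x, z⁆ := by
  simp only [Ring.lie_def]
  noncomm_ring

lemma commutator_mul_left (x y z : A) : ⁅x * y, z⁆ = x * ⁅y, z⁆ + ⁅x, z⁆ * y := by
  simp only [Ring.lie_def]
  noncomm_ring

lemma commutator_smul_one_left (k : ℤ) (x : A) : ⁅k • (1 : A), x⁆ = 0 := by
  rw [smul_lie, (Commute.one_left x).lie_eq, smul_zero]

lemma commutator_smul_one_right (k : ℤ) (x : A) : ⁅x, k • (1 : A)⁆ = 0 := by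
  rw [lie_smul, (Commute.one_right x).lie_eq, smul_zero]

end Commutator

/-- The Kronecker delta, valued in `ℤ` so that it acts on every abelian group. -/
def kroneckerDelta {ι : Type*} [DecidableEq ι] (i j : ι) : ℤ :=
  if i = j then 1 else 0

local notation "δ" => kroneckerDelta

section KroneckerDelta

variable {ι κ : Type*} [DecidableEq ι] [DecidableEq κ]

lemma kroneckerDelta_comm (i j : ι) : δ i j = δ j i := by
  simp only [kroneckerDelta, eq_comm]

lemma kroneckerDelta_inl_inl (i j : ι) : δ (Sum.inl i : ι ⊕ κ) (Sum.inl j) = δ i j := by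
  simp only [kroneckerDelta, Sum.inl.injEq]

lemma kroneckerDelta_inr_inr (i j : κ) : δ (Sum.inr i : ι ⊕ κ) (Sum.inr j) = δ i j := by
  simp only [kroneckerDelta, Sum.inr.injEq]

lemma kroneckerDelta_inl_inr (i : ι) (j : κ) : δ (Sum.inl i : ι ⊕ κ) (Sum.inr j) = 0 := by
  simp only [kroneckerDelta, reduceCtorEq, if_false]

lemma kroneckerDelta_inr_inl (i : κ) (j : ι) : δ (Sum.inr i : ι ⊕ κ) (Sum.inl j) = 0 := by
  simp only [kroneckerDelta, reduceCtorEq, if_false]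

lemma ite_one_zero_smul {R M : Type*} [Semiring R] [AddCommGroup M] [Module R M] (i j : ι) (x : M) :
    (if i = j then (1 : R) else 0) • x = δ i j • x := by
  simp only [kroneckerDelta, ite_smul, one_smul, zero_smul]

end KroneckerDelta

/-- A family of bosonic modes in a ring `A`, indexed by `σ`: annihilation and creation operators
satisfying the canonical commutation relations. -/
structure BosonicModes (σ A : Type*) [DecidableEq σ] [Ring A] where
  annihilate : σ → A
  create : σ → A
  commute_annihilate (i j : σ) : Commute (annihilate i) (annihilate j)
  commute_create (i j : σ) : Commute (create i) (create j)
  lie_annihilate_create (i j : σ) : ⁅annihilate i, create j⁆ = δ i j • (1 : A)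

namespace BosonicModes

section Bilinears

variable {σ A : Type*} [DecidableEq σ] [Ring A] (m : BosonicModes σ A) (i j k : σ)

lemma annihilate_mul_create :
    m.annihilate i * m.create j = m.create j * m.annihilate i + δ i j • (1 : A) := by
  rw [← m.lie_annihilate_create, Ring.lie_def, add_sub_cancel]

lemma lie_create_annihilate : ⁅m.create i, m.annihilate j⁆ = -(δ j i • (1 : A)) := by
  rw [← lie_skew, m.lie_annihilate_create]

lemma lie_create_mul_annihilate_create :
    ⁅m.create i * m.annihilate j, m.create k⁆ = δ j k • m.create i := by
  rw [commutator_mul_left, m.lie_annihilate_create, (m.commute_create i k).lie_eq, zero_mul,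
    add_zero, mul_smul_comm, mul_one]

lemma lie_create_mul_annihilate_annihilate :
    ⁅m.create i * m.annihilate j, m.annihilate k⁆ = -(δ k i • m.annihilate j) := by
  rw [commutator_mul_left, m.lie_create_annihilate, (m.commute_annihilate j k).lie_eq, mul_zero,
    zero_add, neg_mul, smul_mul_assoc, one_mul]

lemma lie_annihilate_mul_annihilate_create :
    ⁅m.annihilate i * m.annihilate j, m.create k⁆ =
      δ j k • m.annihilate i + δ i k • m.annihilate j := by
  rw [commutator_mul_left, m.lie_annihilate_create, m.lie_annihilate_create, mul_smul_comm,
    mul_one, smul_mul_assoc, one_mul]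

end Bilinears

section JordanSchwinger

variable {ι A : Type*} [DecidableEq ι] [Ring A] (m : BosonicModes (ι ⊕ ι) A) (a b c d : ι)

/-- The Jordan–Schwinger generator `E_{ab} = A_a† A_b + B_a† B_b + δ_{ab}`, where the modes `A`
and `B` are indexed by the left and right summands of `ι ⊕ ι`. -/
def E : A :=
  m.create (Sum.inl a) * m.annihilate (Sum.inl b) +
    m.create (Sum.inr a) * m.annihilate (Sum.inr b) + δ a b • (1 : A)

/-- The Jordan–Schwinger generator `F_{ab} = B_a A_b - A_a B_b`. -/
def F : A :=
  m.annihilate (Sum.inr a) * m.annihilate (Sum.inl b) -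
    m.annihilate (Sum.inl a) * m.annihilate (Sum.inr b)

/-- The Jordan–Schwinger generator `F̃_{ab} = B_a† A_b† - A_a† B_b†`. -/
def Ftilde : A :=
  m.create (Sum.inr a) * m.create (Sum.inl b) - m.create (Sum.inl a) * m.create (Sum.inr b)

lemma lie_E_create_inl : ⁅m.E a b, m.create (Sum.inl c)⁆ = δ b c • m.create (Sum.inl a) := by
  simp only [E, add_lie, lie_create_mul_annihilate_create, commutator_smul_one_left,
    kroneckerDelta_inl_inl, kroneckerDelta_inr_inl, zero_smul, add_zero]

lemma lie_E_create_inr : ⁅m.E a b, m.create (Sum.inr c)⁆ = δ b c • m.create (Sum.inr a) := by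
  simp only [E, add_lie, lie_create_mul_annihilate_create, commutator_smul_one_left,
    kroneckerDelta_inr_inr, kroneckerDelta_inl_inr, zero_smul, add_zero, zero_add]

lemma lie_E_annihilate_inl :
    ⁅m.E a b, m.annihilate (Sum.inl c)⁆ = -(δ a c • m.annihilate (Sum.inl b)) := by
  simp only [E, add_lie, lie_create_mul_annihilate_annihilate, commutator_smul_one_left,
    kroneckerDelta_inl_inl, kroneckerDelta_inl_inr, zero_smul, neg_zero, add_zero,
    kroneckerDelta_comm c a]

lemma lie_E_annihilate_inr :
    ⁅m.E a b, m.annihilate (Sum.inr c)⁆ = -(δ a c • m.annihilate (Sum.inr b)) := by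
  simp only [E, add_lie, lie_create_mul_annihilate_annihilate, commutator_smul_one_left,
    kroneckerDelta_inr_inr, kroneckerDelta_inr_inl, zero_smul, neg_zero, add_zero, zero_add,
    kroneckerDelta_comm c a]

lemma lie_F_create_inl :
    ⁅m.F a b, m.create (Sum.inl c)⁆ =
      δ b c • m.annihilate (Sum.inr a) - δ a c • m.annihilate (Sum.inr b) := by
  simp only [F, sub_lie, lie_annihilate_mul_annihilate_create, kroneckerDelta_inl_inl,
    kroneckerDelta_inr_inl, zero_smul, add_zero, zero_add]

lemma lie_F_create_inr :
    ⁅m.F a b, m.create (Sum.inr c)⁆ =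
      δ a c • m.annihilate (Sum.inl b) - δ b c • m.annihilate (Sum.inl a) := by
  simp only [F, sub_lie, lie_annihilate_mul_annihilate_create, kroneckerDelta_inr_inr,
    kroneckerDelta_inl_inr, zero_smul, add_zero, zero_add]

lemma lie_E_E : ⁅m.E a b, m.E c d⁆ = δ c b • m.E a d - δ a d • m.E c b := by
  rw [E.eq_def m c d]
  simp only [lie_add, commutator_mul_right, commutator_smul_one_right, lie_E_create_inl,
    lie_E_create_inr, lie_E_annihilate_inl, lie_E_annihilate_inr, kroneckerDelta_comm b c,
    smul_mul_assoc, mul_neg, mul_smul_comm]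
  simp only [E]
  module

lemma Ftilde_swap : m.Ftilde a b = -m.Ftilde b a := by
  rw [Ftilde, Ftilde, neg_sub, (m.commute_create (Sum.inr a) (Sum.inl b)).eq,
    (m.commute_create (Sum.inl a) (Sum.inr b)).eq]

lemma lie_E_Ftilde :
    ⁅m.E a b, m.Ftilde c d⁆ = δ b c • m.Ftilde a d - δ b d • m.Ftilde a c := by
  rw [m.Ftilde_swap a c]
  simp only [Ftilde, lie_sub, commutator_mul_right, lie_E_create_inl, lie_E_create_inr,
    smul_mul_assoc, mul_smul_comm]
  module

lemma F_swap : m.F a b = -m.F b a := by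
  rw [F, F, neg_sub, (m.commute_annihilate (Sum.inr a) (Sum.inl b)).eq,
    (m.commute_annihilate (Sum.inl a) (Sum.inr b)).eq]

lemma lie_E_F : ⁅m.E a b, m.F c d⁆ = δ a d • m.F b c - δ a c • m.F b d := by
  rw [m.F_swap b c]
  simp only [F, lie_sub, commutator_mul_right, lie_E_annihilate_inl, lie_E_annihilate_inr,
    neg_mul, mul_neg, smul_mul_assoc, mul_smul_comm]
  module

lemma lie_F_Ftilde :
    ⁅m.F a b, m.Ftilde c d⁆ =
      δ d b • m.E c a + δ c a • m.E d b - δ c b • m.E d a - δ d a • m.E c b := by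
  simp only [Ftilde, lie_sub, commutator_mul_right, lie_F_create_inl, lie_F_create_inr, sub_mul,
    mul_sub, smul_mul_assoc, mul_smul_comm, annihilate_mul_create, kroneckerDelta_inl_inl,
    kroneckerDelta_inr_inr, E, kroneckerDelta_comm a, kroneckerDelta_comm b]
  module

lemma lie_F_F : ⁅m.F a b, m.F c d⁆ = 0 := by
  have commute_F (i : ι ⊕ ι) : Commute (m.F a b) (m.annihilate i) :=
    ((m.commute_annihilate _ i).mul_left (m.commute_annihilate _ i)).sub_left
      ((m.commute_annihilate _ i).mul_left (m.commute_annihilate _ i))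
  exact (((commute_F _).mul_right (commute_F _)).sub_right
    ((commute_F _).mul_right (commute_F _))).lie_eq

lemma lie_Ftilde_Ftilde : ⁅m.Ftilde a b, m.Ftilde c d⁆ = 0 := by
  have commute_Ftilde (i : ι ⊕ ι) : Commute (m.Ftilde a b) (m.create i) :=
    ((m.commute_create _ i).mul_left (m.commute_create _ i)).sub_left
      ((m.commute_create _ i).mul_left (m.commute_create _ i))
  exact (((commute_Ftilde _).mul_right (commute_Ftilde _)).sub_right
    ((commute_Ftilde _).mul_right (commute_Ftilde _))).lie_eq

end JordanSchwinger

end BosonicModes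

section Polynomial

variable {σ R : Type*} [CommRing R]

lemma commute_pderiv (i j : σ) :
    Commute ((pderiv i).toLinearMap : Module.End R (MvPolynomial σ R)) (pderiv j).toLinearMap := by
  classical
  have lie_eq_zero : ⁅pderiv (R := R) i, pderiv (R := R) j⁆ = 0 :=
    derivation_ext fun k ↦ by
      simp [Derivation.commutator_apply, pderiv_X, Pi.single_apply, apply_ite]
  rw [commute_iff_lie_eq, ← Derivation.commutator_coe_linear_map, lie_eq_zero,
    Derivation.coe_zero_linearMap]

lemma lie_pderiv_mulLeft_X [DecidableEq σ] (i j : σ) :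
    ⁅((pderiv i).toLinearMap : Module.End R (MvPolynomial σ R)), LinearMap.mulLeft R (X j)⁆ =
      δ i j • (1 : Module.End R (MvPolynomial σ R)) := by
  refine LinearMap.ext fun p ↦ ?_
  rcases eq_or_ne i j with rfl | hij
  · simp [Ring.lie_def, kroneckerDelta]
  · simp [Ring.lie_def, kroneckerDelta, pderiv_X_of_ne hij.symm, hij]

variable (σ R) in
/-- The bosonic modes acting on polynomials: `X i` creates and `∂/∂X i` annihilates. -/
noncomputable def polynomialModes [DecidableEq σ] :
    BosonicModes σ (Module.End R (MvPolynomial σ R)) where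
  annihilate i := (pderiv i).toLinearMap
  create i := LinearMap.mulLeft R (X i)
  commute_annihilate := commute_pderiv
  commute_create i j := by
    rw [commute_iff_eq, Module.End.mul_eq_comp, Module.End.mul_eq_comp, ← LinearMap.mulLeft_mul,
      ← LinearMap.mulLeft_mul, mul_comm]
  lie_annihilate_create := lie_pderiv_mulLeft_X

end Polynomial

lemma Eop_eq_polynomialModes {n : ℕ} (a b : Fin n) :
    Eop n a b = (polynomialModes (Fin n ⊕ Fin n) ℂ).E a b := by
  funext p
  rw [Eop, ite_one_zero_smul]
  rfl

lemma Fop_eq_polynomialModes {n : ℕ} (a b : Fin n) :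
    Fop n a b = (polynomialModes (Fin n ⊕ Fin n) ℂ).F a b :=
  rfl

lemma Ftildeop_eq_polynomialModes {n : ℕ} (a b : Fin n) :
    Ftildeop n a b = (polynomialModes (Fin n ⊕ Fin n) ℂ).Ftilde a b := by
  funext p
  rw [Ftildeop, sub_mul, mul_assoc, mul_assoc]
  rfl

theorem so_star_commutation_relations_general {ι A : Type*} [DecidableEq ι] [Ring A]
    (m : BosonicModes (ι ⊕ ι) A) (a b c d : ι) :
    ⁅m.E a b, m.E c d⁆ = δ c b • m.E a d - δ a d • m.E c b ∧
    ⁅m.E a b, m.Ftilde c d⁆ = δ b c • m.Ftilde a d - δ b d • m.Ftilde a c ∧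
    ⁅m.E a b, m.F c d⁆ = δ a d • m.F b c - δ a c • m.F b d ∧
    ⁅m.F a b, m.Ftilde c d⁆ =
      δ d b • m.E c a + δ c a • m.E d b - δ c b • m.E d a - δ d a • m.E c b ∧
    ⁅m.F a b, m.F c d⁆ = 0 ∧
    ⁅m.Ftilde a b, m.Ftilde c d⁆ = 0 :=
  ⟨m.lie_E_E a b c d, m.lie_E_Ftilde a b c d, m.lie_E_F a b c d, m.lie_F_Ftilde a b c d,
    m.lie_F_F a b c d, m.lie_Ftilde_Ftilde a b c d⟩

/-- The operators `E_{ab}`, `F_{ab}`, `F̃_{ab}` satisfy the `𝔰𝔬*(2n)` commutation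
relations. -/
theorem so_star_commutation_relations
    {n : ℕ} (hn : 1 ≤ n) (a b c d : Fin n) (p : MvPolynomial (Fin n ⊕ Fin n) ℂ) :
    (Eop n a b (Eop n c d p) - Eop n c d (Eop n a b p) =
      (if c = b then (1 : ℂ) else 0) • Eop n a d p -
      (if a = d then (1 : ℂ) else 0) • Eop n c b p) ∧
    (Eop n a b (Ftildeop n c d p) - Ftildeop n c d (Eop n a b p) =
      (if b = c then (1 : ℂ) else 0) • Ftildeop n a d p -
      (if b = d then (1 : ℂ) else 0) • Ftildeop n a c p) ∧
    (Eop n a b (Fop n c d p) - Fop n c d (Eop n a b p) =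
      (if a = d then (1 : ℂ) else 0) • Fop n b c p -
      (if a = c then (1 : ℂ) else 0) • Fop n b d p) ∧
    (Fop n a b (Ftildeop n c d p) - Ftildeop n c d (Fop n a b p) =
      (if d = b then (1 : ℂ) else 0) • Eop n c a p +
      (if c = a then (1 : ℂ) else 0) • Eop n d b p -
      (if c = b then (1 : ℂ) else 0) • Eop n d a p -
      (if d = a then (1 : ℂ) else 0) • Eop n c b p) ∧
    (Fop n a b (Fop n c d p) - Fop n c d (Fop n a b p) = 0) ∧
    (Ftildeop n a b (Ftildeop n c d p) - Ftildeop n c d (Ftildeop n a b p) = 0) := by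
  obtain ⟨hEE, hEFt, hEF, hFFt, hFF, hFtFt⟩ :=
    so_star_commutation_relations_general (polynomialModes (Fin n ⊕ Fin n) ℂ) a b c d
  simp only [Eop_eq_polynomialModes, Fop_eq_polynomialModes, Ftildeop_eq_polynomialModes,
    ite_one_zero_smul]
  exact ⟨LinearMap.congr_fun hEE p, LinearMap.congr_fun hEFt p, LinearMap.congr_fun hEF p,
    LinearMap.congr_fun hFFt p, LinearMap.congr_fun hFF p, LinearMap.congr_fun hFtFt p⟩
end
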